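/- Let μ₁, …, μₙ be probability measures on ℝⁿ with compact support that are absolutely continuous with respect to Lebesgue measure, and let q be a prime power. Then there exist q pairwise distinct affine functions u₁, …, u_q : ℝⁿ → ℝ such that, setting Vⱼ = {x ∈ ℝⁿ : uⱼ(x) ≥ u_l(x) for all l = 1, …, q}, each Vⱼ is a closed convex set and μᵢ(Vⱼ) = 1/q for every i = 1, …, n and every j = 1, …, q. -/

import Mathlib

/-!
The proof is an elementary version of a configuration-space / test-map argument. Write `q = Q + 1 =
p ^ e`. A configuration is a `q`-tuple of affine functions, given by an `n × q` matrix of linear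
coefficients and a vector of constant terms; the symmetric group permutes the functions, and acts
freely on the configurations of pairwise distinct functions. Sending a configuration to the matrix
of the numbers `μᵢ(Vⱼ) - 1/q` is continuous at every distinct configuration (`tendsto_part`),
equivariant, and has values in matrices with zero row sums, a space of dimension `N = n * Q`. The
theorem says that this map has a zero, and `exists_zero` proves this for every such map `f`.

*The cycle.* The space of label matrices modulo matrices with constant rows is triangulated as a
fan: a flag `(τ, π)` sorts each row by a permutation `τ i` and orders the `N` increments of the
sorted rows by `π`. The partial sums of the flag are matrices of coefficients; where functions still
have equal coefficients, constant terms chosen by a ranking `σ` (for the chain, `σ = 1`) keep them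
distinct. The signed sum of the flag simplices is an `N`-chain of distinct configurations whose
boundary consists of the facets opposite to the vertices with zero coefficients, the facets at
infinity (`bd_flagChain`). Each flag simplex lies in a convex cell of distinct configurations no two
points of which are in the same orbit.

*Divisibility.* An integer function of simplices that is equivariant, up to the sign character
described below, has a sum over the facets at infinity divisible by `p` (`dvd_sum_flagFacet`). The
first step of a flag separates the functions into groups of `k + 1` and `q - k - 1` elements, so a
facet only depends on the ranking within each group; the symmetry moves a permutation `τ i` into the
ranking, and summing over it yields a multiple of the binomial coefficient `q.choose (k + 1)`, which
`p` divides.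

*Degree.* The cochain `rayCochain` counts with sign the cones spanned by `N` label matrices that
contain a fixed generic ray. Its coboundary, on labels in general position, is independent of the
ray: it is the degree `originDegree` of the simplex around the origin. Hence the coboundary is
equivariant up to the sign character by which permutations act on orientations, even though the
cochain itself is not. With every configuration labelled by its own coefficients, the ray meets
exactly one facet at infinity, so the sum there is `±1` (`eventually_ray_count`).

*Conclusion.* Suppose that `f` has no zero. On a fine barycentric subdivision, the labels `f x` of
every small simplex lie in an open half-space, so all the degrees vanish. Comparing the labelling by
`f` with the labelling by coefficients through the prism operator (`homotopy_identity`), `±1` equals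
a sum of equivariant terms over the facets at infinity, a multiple of `p`: a contradiction. General
position is reached by perturbing the labels of one representative of each orbit of vertices and
extending equivariantly (`dense_generic`, `cob_eq`).
-/

open MeasureTheory

namespace Equipart

/-! ### Chains of ordered tuples -/

/-- Augmented ordered chains on `X`: the free abelian group on `k`-tuples of points, that is on
ordered simplices of dimension `k - 1`; `k = 0` is the augmentation degree. -/
abbrev Chain (X : Type*) (k : ℕ) := (Fin k → X) →₀ ℤ

section Chains

variable {X Y Z : Type*}

/-- The ordered simplex `x` as a chain. -/
noncomputable def sx {k : ℕ} (x : Fin k → X) : Chain X k := Finsupp.single x 1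

/-- Linear extension of a map defined on ordered simplices. -/
noncomputable def lin {k : ℕ} {M : Type*} [AddCommGroup M] (f : (Fin k → X) → M) :
    Chain X k →ₗ[ℤ] M := Finsupp.linearCombination ℤ f

@[simp] lemma lin_sx {k : ℕ} {M : Type*} [AddCommGroup M] (f : (Fin k → X) → M) (x : Fin k → X) :
    lin f (sx x) = f x := by simp [lin, sx]

lemma chain_ext {k : ℕ} {M : Type*} [AddCommGroup M] {f g : Chain X k →ₗ[ℤ] M}
    (h : ∀ x, f (sx x) = g (sx x)) : f = g := by
  apply Finsupp.lhom_ext'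
  intro x
  ext
  simpa [sx] using h x

/-- The simplicial boundary, including the augmentation. -/
noncomputable def bd (X : Type*) (k : ℕ) : Chain X (k + 1) →ₗ[ℤ] Chain X k :=
  lin fun x => ∑ i : Fin (k + 1), (-1 : ℤ) ^ (i : ℕ) • sx (i.removeNth x)

/-- The cone with apex `a`. -/
noncomputable def cone {k : ℕ} (a : X) : Chain X k →ₗ[ℤ] Chain X (k + 1) :=
  lin fun x => sx (Fin.cons a x : Fin (k + 1) → X)

/-- Push-forward of chains along a map of points. -/
noncomputable def push {k : ℕ} (f : X → Y) : Chain X k →ₗ[ℤ] Chain Y k :=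
  lin fun x => sx (f ∘ x)

@[simp] lemma cone_sx {k : ℕ} (a : X) (x : Fin k → X) :
    cone a (sx x) = sx (Fin.cons a x : Fin (k + 1) → X) := by simp [cone]

@[simp] lemma push_sx {k : ℕ} (f : X → Y) (x : Fin k → X) : push f (sx x) = sx (f ∘ x) := by
  simp [push]

lemma bd_sx {k : ℕ} (x : Fin (k + 1) → X) :
    bd X k (sx x) = ∑ i : Fin (k + 1), (-1 : ℤ) ^ (i : ℕ) • sx (i.removeNth x) := by simp [bd]

lemma bd_cone_sx_zero (a : X) (x : Fin 0 → X) :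
    bd X 0 (sx (Fin.cons a x : Fin 1 → X)) = sx x := by
  have h : (0 : Fin 1).removeNth (Fin.cons a x : Fin 1 → X) = x := funext fun i => i.elim0
  rw [bd_sx, Fin.sum_univ_one, h]
  simp

lemma bd_cone_sx {k : ℕ} (a : X) (x : Fin (k + 1) → X) :
    bd X (k + 1) (sx (Fin.cons a x : Fin (k + 2) → X)) = sx x - cone a (bd X k (sx x)) := by
  rw [bd_sx, Fin.sum_univ_succ, bd_sx, map_sum]
  have h0 : (0 : Fin (k + 2)).removeNth (Fin.cons a x : Fin (k + 2) → X) = x := by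
    ext i; simp [Fin.removeNth]
  have hs : ∀ i : Fin (k + 1), (i.succ).removeNth (Fin.cons a x : Fin (k + 2) → X) =
      (Fin.cons a (i.removeNth x) : Fin (k + 1) → X) := by
    intro i
    ext j
    refine Fin.cases ?_ (fun j => ?_) j
    · simp [Fin.removeNth]
    · simp [Fin.removeNth]
  simp only [h0, hs, Fin.val_zero, pow_zero, one_smul, Fin.val_succ, map_smul, cone_sx]
  rw [sub_eq_add_neg, ← Finset.sum_neg_distrib]
  congr 1
  refine Finset.sum_congr rfl fun i _ => ?_
  rw [pow_succ]
  simp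

lemma bd_cone {k : ℕ} (a : X) (u : Chain X (k + 1)) :
    bd X (k + 1) (cone a u) = u - cone a (bd X k u) := by
  have : (bd X (k + 1)).comp (cone a) = LinearMap.id - (cone a).comp (bd X k) := by
    apply chain_ext
    intro x
    simpa using bd_cone_sx a x
  exact LinearMap.congr_fun this u

lemma bd_cone_zero (a : X) (u : Chain X 0) : bd X 0 (cone a u) = u := by
  have : (bd X 0).comp (cone a) = LinearMap.id := by
    apply chain_ext
    intro x
    simpa using bd_cone_sx_zero a x
  exact LinearMap.congr_fun this u

lemma sx_eq_cone {k : ℕ} (x : Fin (k + 1) → X) : sx x = cone (x 0) (sx (Fin.tail x)) := by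
  rw [cone_sx, Fin.cons_self_tail]

lemma bd_bd (k : ℕ) (u : Chain X (k + 2)) : bd X k (bd X (k + 1) u) = 0 := by
  have : (bd X k).comp (bd X (k + 1)) = 0 := by
    clear u
    induction k with
    | zero =>
      apply chain_ext
      intro x
      rw [LinearMap.comp_apply, sx_eq_cone, bd_cone, map_sub, bd_cone_zero]
      simp
    | succ k ih =>
      apply chain_ext
      intro x
      rw [LinearMap.comp_apply, sx_eq_cone, bd_cone, map_sub, bd_cone]
      have := LinearMap.congr_fun ih (sx (Fin.tail x))
      simp only [LinearMap.comp_apply, LinearMap.zero_apply] at this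
      simp [this]
  exact LinearMap.congr_fun this u

lemma bd_push {k : ℕ} (f : X → Y) (u : Chain X (k + 1)) :
    bd Y k (push f u) = push f (bd X k u) := by
  have : (bd Y k).comp (push f) = (push f).comp (bd X k) := by
    apply chain_ext
    intro x
    simp only [LinearMap.comp_apply, push_sx, bd_sx, map_sum, map_smul]
    rfl
  exact LinearMap.congr_fun this u

lemma push_cone {k : ℕ} (f : X → Y) (a : X) (u : Chain X k) :
    push f (cone a u) = cone (f a) (push f u) := by
  have : (push f).comp (cone (k := k) a) = (cone (f a)).comp (push f) := by
    apply chain_ext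
    intro x
    simp only [LinearMap.comp_apply, push_sx, cone_sx]
    congr 1
    ext j
    refine Fin.cases ?_ (fun j => ?_) j <;> simp
  exact LinearMap.congr_fun this u

lemma push_push {k : ℕ} (f : X → Y) (g : Y → Z) (u : Chain X k) :
    push g (push f u) = push (g ∘ f) u := by
  have : (push g).comp (push (k := k) f) = push (g ∘ f) := by
    apply chain_ext
    intro x
    simp [Function.comp_assoc]
  exact LinearMap.congr_fun this u

/-- The chain `u` is a combination of tuples satisfying `P`. -/
def SuppIn {k : ℕ} (P : (Fin k → X) → Prop) (u : Chain X k) : Prop := ∀ x ∈ u.support, P x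

lemma SuppIn.induction {k : ℕ} {P : (Fin k → X) → Prop} {u : Chain X k} (h : SuppIn P u) :
    u ∈ Submodule.span ℤ (sx '' {x | P x}) := by
  rw [← Finsupp.sum_single u]
  refine Submodule.sum_mem _ fun x hx => ?_
  have : Finsupp.single x (u x) = (u x) • sx x := by simp [sx]
  rw [this]
  exact Submodule.smul_mem _ _ (Submodule.subset_span ⟨x, h x hx, rfl⟩)

lemma suppIn_of_mem {k : ℕ} {P : (Fin k → X) → Prop} {u : Chain X k}
    (h : u ∈ Submodule.span ℤ (sx '' {x | P x})) : SuppIn P u := by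
  have : u ∈ Finsupp.supported ℤ ℤ {x | P x} := by
    rw [Finsupp.supported_eq_span_single]
    exact h
  intro x hx
  exact this hx

lemma suppIn_iff {k : ℕ} {P : (Fin k → X) → Prop} {u : Chain X k} :
    SuppIn P u ↔ u ∈ Submodule.span ℤ (sx '' {x | P x}) := ⟨SuppIn.induction, suppIn_of_mem⟩

lemma SuppIn.mono {k : ℕ} {P Q : (Fin k → X) → Prop} {u : Chain X k} (h : SuppIn P u)
    (hPQ : ∀ x, P x → Q x) : SuppIn Q u := fun x hx => hPQ x (h x hx)

lemma suppIn_sx {k : ℕ} {P : (Fin k → X) → Prop} {x : Fin k → X} (h : P x) : SuppIn P (sx x) :=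
  suppIn_iff.2 (Submodule.subset_span ⟨x, h, rfl⟩)

lemma SuppIn.add {k : ℕ} {P : (Fin k → X) → Prop} {u v : Chain X k} (hu : SuppIn P u)
    (hv : SuppIn P v) : SuppIn P (u + v) :=
  suppIn_iff.2 (Submodule.add_mem _ (suppIn_iff.1 hu) (suppIn_iff.1 hv))

lemma SuppIn.sub {k : ℕ} {P : (Fin k → X) → Prop} {u v : Chain X k} (hu : SuppIn P u)
    (hv : SuppIn P v) : SuppIn P (u - v) :=
  suppIn_iff.2 (Submodule.sub_mem _ (suppIn_iff.1 hu) (suppIn_iff.1 hv))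

lemma suppIn_zero {k : ℕ} {P : (Fin k → X) → Prop} : SuppIn P (0 : Chain X k) :=
  suppIn_iff.2 (Submodule.zero_mem _)

lemma SuppIn.map {k l : ℕ} {P : (Fin k → X) → Prop} {Q : (Fin l → Y) → Prop} {u : Chain X k}
    (hu : SuppIn P u) (F : Chain X k →ₗ[ℤ] Chain Y l) (hF : ∀ x, P x → SuppIn Q (F (sx x))) :
    SuppIn Q (F u) := by
  have h := suppIn_iff.1 hu
  refine suppIn_iff.2 ?_
  have : Submodule.span ℤ (sx '' {x | P x}) ≤
      (Submodule.span ℤ (sx '' {x | Q x})).comap F := by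
    rw [Submodule.span_le]
    rintro _ ⟨x, hx, rfl⟩
    exact suppIn_iff.1 (hF x hx)
  exact this h

/-- Two linear maps agreeing on the tuples allowed in `u` agree on `u`. -/
lemma SuppIn.congr {k : ℕ} {P : (Fin k → X) → Prop} {u : Chain X k} {M : Type*} [AddCommGroup M]
    (hu : SuppIn P u) {F G : Chain X k →ₗ[ℤ] M} (hFG : ∀ x, P x → F (sx x) = G (sx x)) :
    F u = G u := by
  have h := suppIn_iff.1 hu
  have : Submodule.span ℤ (sx '' {x | P x}) ≤ LinearMap.eqLocus F G := by
    rw [Submodule.span_le]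
    rintro _ ⟨x, hx, rfl⟩
    exact hFG x hx
  exact this h

lemma SuppIn.bd {k : ℕ} {P : (Fin (k + 1) → X) → Prop} {Q : (Fin k → X) → Prop}
    {u : Chain X (k + 1)} (hu : SuppIn P u) (h : ∀ x, P x → ∀ i : Fin (k + 1), Q (i.removeNth x)) :
    SuppIn Q (bd X k u) := by
  refine hu.map _ fun x hx => ?_
  rw [bd_sx]
  refine suppIn_iff.2 (Submodule.sum_mem _ fun i _ => Submodule.smul_mem _ _ ?_)
  exact Submodule.subset_span ⟨_, h x hx i, rfl⟩

/-! ### The prism operator -/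

/-- The prism operator between the push-forwards along `f₀` and `f₁`. -/
noncomputable def prism (f₀ f₁ : X → Y) : ∀ k, Chain X k →ₗ[ℤ] Chain Y (k + 1)
  | 0 => 0
  | k + 1 => lin fun x => cone (f₀ (x 0)) (sx (f₁ ∘ x)) -
      cone (f₀ (x 0)) (prism f₀ f₁ k (sx (Fin.tail x)))

lemma prism_cone {k : ℕ} (f₀ f₁ : X → Y) (a : X) (u : Chain X k) :
    prism f₀ f₁ (k + 1) (cone a u) =
      cone (f₀ a) (cone (f₁ a) (push f₁ u)) - cone (f₀ a) (prism f₀ f₁ k u) := by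
  have : (prism f₀ f₁ (k + 1)).comp (cone a) =
      (cone (f₀ a)).comp ((cone (f₁ a)).comp (push f₁)) - (cone (f₀ a)).comp (prism f₀ f₁ k) := by
    apply chain_ext
    intro x
    simp only [LinearMap.comp_apply, LinearMap.sub_apply, ← push_cone]
    rw [cone_sx]
    simp [prism]
  exact LinearMap.congr_fun this u

lemma bd_prism {k : ℕ} (f₀ f₁ : X → Y) (u : Chain X (k + 1)) :
    bd Y (k + 1) (prism f₀ f₁ (k + 1) u) + prism f₀ f₁ k (bd X k u) = push f₁ u - push f₀ u := by
  have : (bd Y (k + 1)).comp (prism f₀ f₁ (k + 1)) + (prism f₀ f₁ k).comp (bd X k) =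
      push f₁ - push f₀ := by
    clear u
    induction k with
    | zero =>
      apply chain_ext
      intro x
      rw [sx_eq_cone]
      simp only [LinearMap.comp_apply, LinearMap.sub_apply, LinearMap.add_apply, prism_cone,
        push_cone, bd_cone_zero, map_sub, bd_cone]
      have h : f₁ ∘ Fin.tail x = f₀ ∘ Fin.tail x := funext fun i => i.elim0
      simp [prism, h]
    | succ k ih =>
      apply chain_ext
      intro x
      have ih := LinearMap.congr_fun ih (sx (Fin.tail x))
      simp only [LinearMap.comp_apply, LinearMap.sub_apply, LinearMap.add_apply] at ih
      rw [sx_eq_cone]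
      simp only [LinearMap.comp_apply, LinearMap.sub_apply, LinearMap.add_apply, prism_cone,
        push_cone, map_sub, bd_cone, bd_push]
      have ih' := congrArg (cone (f₀ (x 0))) ih
      simp only [map_add, map_sub] at ih'
      have h := eq_sub_of_add_eq ih'
      rw [h]
      abel
  exact LinearMap.congr_fun this u

lemma prism_push {k : ℕ} {X' Y' : Type*} (f₀ f₁ : X → Y) (f₀' f₁' : X' → Y') (g : X → X')
    (g' : Y → Y') {A : Set X} (h₀ : ∀ x ∈ A, f₀' (g x) = g' (f₀ x))
    (h₁ : ∀ x ∈ A, f₁' (g x) = g' (f₁ x)) {u : Chain X k} (hu : SuppIn (fun x => ∀ i, x i ∈ A) u) :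
    prism f₀' f₁' k (push g u) = push g' (prism f₀ f₁ k u) := by
  refine hu.congr (F := (prism f₀' f₁' k).comp (push g)) (G := (push g').comp (prism f₀ f₁ k)) ?_
  intro x hx
  clear hu u
  induction k with
  | zero => simp [prism]
  | succ k ih =>
    have ih := ih (Fin.tail x) (fun i => hx _)
    simp only [LinearMap.comp_apply, push_sx] at ih
    simp only [LinearMap.comp_apply, push_sx, prism, lin_sx, map_sub, push_cone]
    have e1 : Fin.tail (g ∘ x) = g ∘ Fin.tail x := rfl
    have e2 : f₁' ∘ g ∘ x = g' ∘ f₁ ∘ x := by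
      ext i; exact h₁ _ (hx i)
    rw [e1, ih, e2, Function.comp_apply, h₀ _ (hx 0)]

/-- Vertices of the prism over `x` are values of `f₀` or `f₁` at points of `x`. -/
lemma prism_supp {k : ℕ} (f₀ f₁ : X → Y) (x : Fin k → X) :
    SuppIn (fun v => ∃ (b : Fin (k + 1) → Bool) (i : Fin (k + 1) → Fin k),
      ∀ j, v j = if b j then f₁ (x (i j)) else f₀ (x (i j))) (prism f₀ f₁ k (sx x)) := by
  induction k with
  | zero => simpa [prism] using suppIn_zero
  | succ k ih =>
    simp only [prism, lin_sx]
    refine SuppIn.sub ?_ ?_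
    · rw [cone_sx]
      refine suppIn_sx ⟨Fin.cons false fun _ => true, Fin.cons 0 id, fun j => ?_⟩
      refine Fin.cases ?_ (fun j => ?_) j <;> simp
    · refine (ih (Fin.tail x)).map _ ?_
      rintro v ⟨b, i, h⟩
      rw [cone_sx]
      refine suppIn_sx ⟨Fin.cons false b, Fin.cons 0 fun j => (i j).succ, fun j => ?_⟩
      refine Fin.cases ?_ (fun j => ?_) j
      · simp
      · simp [h, Fin.tail]

end Chains

/-! ### Barycentric subdivision of affine chains -/

lemma cone_suppIn {E : Type*} {C : Set E} {k : ℕ} {a : E} (ha : a ∈ C) {u : Chain E k}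
    (hu : SuppIn (fun v => ∀ i, v i ∈ C) u) : SuppIn (fun v => ∀ i, v i ∈ C) (cone a u) := by
  refine hu.map _ fun v hv => ?_
  rw [cone_sx]
  refine suppIn_sx fun i => ?_
  refine Fin.cases ?_ (fun i => ?_) i
  · simpa using ha
  · simpa using hv i

section Subdivision

variable {E : Type*} [NormedAddCommGroup E] [NormedSpace ℝ E]

/-- The barycentre of a tuple. -/
noncomputable def bary {k : ℕ} (x : Fin (k + 1) → E) : E := ((k : ℝ) + 1)⁻¹ • ∑ i, x i

variable (E) in
/-- Barycentric subdivision. -/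
noncomputable def subd : ∀ k, Chain E k →ₗ[ℤ] Chain E k
  | 0 => LinearMap.id
  | k + 1 => lin fun x => cone (bary x) (subd k (bd E k (sx x)))

variable (E) in
/-- The chain homotopy between barycentric subdivision and the identity. -/
noncomputable def subdT : ∀ k, Chain E k →ₗ[ℤ] Chain E (k + 1)
  | 0 => 0
  | k + 1 => lin fun x => cone (bary x) (sx x - subdT k (bd E k (sx x)))

lemma subd_succ_sx {k : ℕ} (x : Fin (k + 1) → E) :
    subd E (k + 1) (sx x) = cone (bary x) (subd E k (bd E k (sx x))) := by simp [subd]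

lemma subdT_succ_sx {k : ℕ} (x : Fin (k + 1) → E) :
    subdT E (k + 1) (sx x) = cone (bary x) (sx x - subdT E k (bd E k (sx x))) := by simp [subdT]

lemma bd_subd {k : ℕ} (u : Chain E (k + 1)) :
    bd E k (subd E (k + 1) u) = subd E k (bd E k u) := by
  have : (bd E k).comp (subd E (k + 1)) = (subd E k).comp (bd E k) := by
    clear u
    induction k with
    | zero =>
      apply chain_ext
      intro x
      simp only [LinearMap.comp_apply, subd_succ_sx, bd_cone_zero]
    | succ k ih =>
      apply chain_ext
      intro x
      have ih := LinearMap.congr_fun ih (bd E (k + 1) (sx x))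
      simp only [LinearMap.comp_apply, bd_bd, map_zero] at ih
      simp only [LinearMap.comp_apply, subd_succ_sx (k := k + 1), bd_cone, ih, map_zero, sub_zero]
  exact LinearMap.congr_fun this u

lemma bd_subdT {k : ℕ} (u : Chain E (k + 1)) :
    bd E (k + 1) (subdT E (k + 1) u) + subdT E k (bd E k u) = u - subd E (k + 1) u := by
  have : (bd E (k + 1)).comp (subdT E (k + 1)) + (subdT E k).comp (bd E k) =
      LinearMap.id - subd E (k + 1) := by
    clear u
    induction k with
    | zero =>
      apply chain_ext
      intro x
      simp [subdT, subd, bd_cone_sx]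
    | succ k ih =>
      apply chain_ext
      intro x
      have ih := LinearMap.congr_fun ih (bd E (k + 1) (sx x))
      simp only [LinearMap.comp_apply, LinearMap.add_apply, LinearMap.sub_apply, LinearMap.id_apply,
        bd_bd, map_zero, add_zero] at ih
      simp only [LinearMap.comp_apply, LinearMap.add_apply, LinearMap.sub_apply, LinearMap.id_apply,
        subd_succ_sx (k := k + 1), subdT_succ_sx (k := k + 1), bd_cone, map_sub, ih]
      abel
  exact LinearMap.congr_fun this u

lemma bary_comp (g : E →ₗ[ℝ] E) {k : ℕ} (x : Fin (k + 1) → E) : bary (g ∘ x) = g (bary x) := by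
  simp [bary]

lemma subd_push (g : E →ₗ[ℝ] E) {k : ℕ} (u : Chain E k) :
    subd E k (push g u) = push g (subd E k u) := by
  have : (subd E k).comp (push g) = (push g).comp (subd E k) := by
    clear u
    induction k with
    | zero => rfl
    | succ k ih =>
      apply chain_ext
      intro x
      have ih := LinearMap.congr_fun ih (bd E k (sx x))
      simp only [LinearMap.comp_apply, ← bd_push, push_sx] at ih
      simp only [LinearMap.comp_apply, push_sx, subd_succ_sx, push_cone, ih, bary_comp]
  exact LinearMap.congr_fun this u

lemma subdT_push (g : E →ₗ[ℝ] E) {k : ℕ} (u : Chain E k) :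
    subdT E k (push g u) = push g (subdT E k u) := by
  have : (subdT E k).comp (push g) = (push g).comp (subdT E k) := by
    clear u
    induction k with
    | zero => apply LinearMap.ext; intro u; simp [subdT]
    | succ k ih =>
      apply chain_ext
      intro x
      have ih := LinearMap.congr_fun ih (bd E k (sx x))
      simp only [LinearMap.comp_apply, ← bd_push, push_sx] at ih
      simp only [LinearMap.comp_apply, push_sx, subdT_succ_sx, push_cone, ih, bary_comp, map_sub]
  exact LinearMap.congr_fun this u

lemma bary_mem {C : Set E} (hC : Convex ℝ C) {k : ℕ} {x : Fin (k + 1) → E} (hx : ∀ i, x i ∈ C) :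
    bary x ∈ C := by
  rw [bary, Finset.smul_sum]
  refine hC.sum_mem (fun i _ => by positivity) ?_ fun i _ => hx i
  simp
  field_simp

lemma subd_suppIn {C : Set E} (hC : Convex ℝ C) {k : ℕ} {u : Chain E k}
    (hu : SuppIn (fun v => ∀ i, v i ∈ C) u) : SuppIn (fun v => ∀ i, v i ∈ C) (subd E k u) := by
  induction k with
  | zero => simpa [subd] using hu
  | succ k ih =>
    refine hu.map _ fun x hx => ?_
    rw [subd_succ_sx]
    exact cone_suppIn (bary_mem hC hx) (ih (SuppIn.bd (P := fun v => ∀ i, v i ∈ C) (suppIn_sx hx)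
      fun x hx i j => hx _))

lemma subdT_suppIn {C : Set E} (hC : Convex ℝ C) {k : ℕ} {u : Chain E k}
    (hu : SuppIn (fun v => ∀ i, v i ∈ C) u) : SuppIn (fun v => ∀ i, v i ∈ C) (subdT E k u) := by
  induction k with
  | zero => simpa [subdT] using suppIn_zero
  | succ k ih =>
    refine hu.map _ fun x hx => ?_
    rw [subdT_succ_sx]
    exact cone_suppIn (bary_mem hC hx)
      ((suppIn_sx hx).sub (ih (SuppIn.bd (P := fun v => ∀ i, v i ∈ C) (suppIn_sx hx)
      fun x hx i j => hx _)))

lemma dist_bary_le {k : ℕ} {x : Fin (k + 1) → E} {D : ℝ} (hD : ∀ i j, dist (x i) (x j) ≤ D)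
    (i : Fin (k + 1)) : dist (x i) (bary x) ≤ (1 - 1 / ((k : ℝ) + 1)) * D := by
  have hk : (k : ℝ) + 1 ≠ 0 := by positivity
  have h1 : x i - bary x = ((k : ℝ) + 1)⁻¹ • ∑ j, (x i - x j) := by
    rw [bary, Finset.sum_sub_distrib, smul_sub]
    simp only [Finset.sum_const, Finset.card_univ, Fintype.card_fin]
    rw [← Nat.cast_smul_eq_nsmul ℝ, smul_smul]
    push_cast
    rw [inv_mul_cancel₀ hk, one_smul]
  have h2 : ‖∑ j, (x i - x j)‖ ≤ k * D := by
    rw [← Finset.add_sum_erase _ _ (Finset.mem_univ i), sub_self, zero_add]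
    refine (norm_sum_le _ _).trans ?_
    refine (Finset.sum_le_card_nsmul _ _ D fun j _ => ?_).trans ?_
    · rw [← dist_eq_norm]; exact hD i j
    · simp
  rw [dist_eq_norm, h1, norm_smul, Real.norm_of_nonneg (by positivity)]
  calc ((k : ℝ) + 1)⁻¹ * ‖∑ j, (x i - x j)‖ ≤ ((k : ℝ) + 1)⁻¹ * (k * D) := by gcongr
    _ = _ := by field_simp; ring

/-- Subdividing a simplex with at most `K` vertices shrinks edges by the factor `1 - 1 / K`. -/
lemma subd_mesh {K : ℕ} {D : ℝ} {k : ℕ} (hk : k ≤ K) {u : Chain E k}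
    (hu : SuppIn (fun v => ∀ i j, dist (v i) (v j) ≤ D) u) :
    SuppIn (fun v => ∀ i j, dist (v i) (v j) ≤ (1 - 1 / (K : ℝ)) * D) (subd E k u) := by
  induction k with
  | zero => exact (suppIn_iff.2 (suppIn_iff.1 hu)).mono fun x _ i => i.elim0
  | succ k ih =>
    refine hu.map _ fun x hx => ?_
    have hD : 0 ≤ D := by simpa using hx 0 0
    have hKk : (1 - 1 / ((k : ℝ) + 1)) * D ≤ (1 - 1 / (K : ℝ)) * D := by
      have : (k : ℝ) + 1 ≤ K := by exact_mod_cast hk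
      gcongr
    have h0 : 0 ≤ (1 - 1 / (K : ℝ)) * D := by
      have := (dist_nonneg (x := x 0) (y := bary x)).trans (dist_bary_le hx 0)
      exact this.trans hKk
    rw [subd_succ_sx]
    have hA : SuppIn (fun v => ∀ i, v i ∈ Metric.closedBall (bary x) ((1 - 1 / (K : ℝ)) * D))
        (subd E k (bd E k (sx x))) := by
      refine subd_suppIn (convex_closedBall _ _) (SuppIn.bd
        (P := fun v => ∀ i, v i ∈ Metric.closedBall (bary x) ((1 - 1 / (K : ℝ)) * D))
        (suppIn_sx ?_) fun x hx i j => hx _)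
      intro i
      exact (dist_bary_le hx i).trans hKk
    have hB := ih (by omega) (u := bd E k (sx x)) (SuppIn.bd
      (P := fun v => ∀ i j, dist (v i) (v j) ≤ D) (suppIn_sx hx) fun x hx i a b => hx _ _)
    have hAB : SuppIn (fun v => (∀ i, v i ∈ Metric.closedBall (bary x) ((1 - 1 / (K : ℝ)) * D)) ∧
        ∀ i j, dist (v i) (v j) ≤ (1 - 1 / (K : ℝ)) * D) (subd E k (bd E k (sx x))) :=
      fun v hv => ⟨hA v hv, hB v hv⟩
    refine hAB.map _ fun v hv => ?_
    rw [cone_sx]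
    refine suppIn_sx fun i j => ?_
    refine Fin.cases ?_ (fun i => ?_) i <;> refine Fin.cases ?_ (fun j => ?_) j
    · simpa using h0
    · simpa [dist_comm] using hv.1 j
    · simpa using hv.1 i
    · simpa using hv.2 i j

variable (E) in
/-- Iterated barycentric subdivision. -/
noncomputable def subdIter (k : ℕ) : ℕ → Chain E k →ₗ[ℤ] Chain E k
  | 0 => LinearMap.id
  | m + 1 => (subd E k).comp (subdIter k m)

variable (E) in
/-- The chain homotopy between iterated subdivision and the identity. -/
noncomputable def subdIterT (k : ℕ) : ℕ → Chain E k →ₗ[ℤ] Chain E (k + 1)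
  | 0 => 0
  | m + 1 => subdIterT k m + (subdT E k).comp (subdIter E k m)

lemma bd_subdIter {k : ℕ} (m : ℕ) (u : Chain E (k + 1)) :
    bd E k (subdIter E (k + 1) m u) = subdIter E k m (bd E k u) := by
  induction m with
  | zero => rfl
  | succ m ih => simp [subdIter, bd_subd, ih]

lemma bd_subdIterT {k : ℕ} (m : ℕ) (u : Chain E (k + 1)) :
    bd E (k + 1) (subdIterT E (k + 1) m u) + subdIterT E k m (bd E k u) =
      u - subdIter E (k + 1) m u := by
  induction m with
  | zero => simp [subdIterT, subdIter]
  | succ m ih =>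
    have h := bd_subdT (subdIter E (k + 1) m u)
    rw [bd_subdIter] at h
    simp only [subdIterT, subdIter, LinearMap.add_apply, LinearMap.comp_apply, map_add]
    have : ∀ a b c d e f g : Chain E (k + 1), a + c = e - f → b + d = f - g →
        a + b + (c + d) = e - g := by
      intro a b c d e f g h1 h2
      rw [add_add_add_comm, h1, h2]; abel
    exact this _ _ _ _ _ _ _ ih h

lemma subdIter_push (g : E →ₗ[ℝ] E) {k : ℕ} (m : ℕ) (u : Chain E k) :
    subdIter E k m (push g u) = push g (subdIter E k m u) := by
  induction m with
  | zero => rfl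
  | succ m ih => simp [subdIter, subd_push, ih]

lemma subdIterT_push (g : E →ₗ[ℝ] E) {k : ℕ} (m : ℕ) (u : Chain E k) :
    subdIterT E k m (push g u) = push g (subdIterT E k m u) := by
  induction m with
  | zero => simp [subdIterT]
  | succ m ih => simp [subdIterT, subdT_push, subdIter_push, ih]

lemma subdIter_suppIn {C : Set E} (hC : Convex ℝ C) {k : ℕ} (m : ℕ) {u : Chain E k}
    (hu : SuppIn (fun v => ∀ i, v i ∈ C) u) :
    SuppIn (fun v => ∀ i, v i ∈ C) (subdIter E k m u) := by
  induction m with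
  | zero => exact hu
  | succ m ih => exact subd_suppIn hC ih

lemma subdIterT_suppIn {C : Set E} (hC : Convex ℝ C) {k : ℕ} (m : ℕ) {u : Chain E k}
    (hu : SuppIn (fun v => ∀ i, v i ∈ C) u) :
    SuppIn (fun v => ∀ i, v i ∈ C) (subdIterT E k m u) := by
  induction m with
  | zero => exact suppIn_zero
  | succ m ih => exact ih.add (subdT_suppIn hC (subdIter_suppIn hC m hu))

lemma subdIter_mesh {k : ℕ} (m : ℕ) {D : ℝ} {u : Chain E k}
    (hu : SuppIn (fun v => ∀ i j, dist (v i) (v j) ≤ D) u) :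
    SuppIn (fun v => ∀ i j, dist (v i) (v j) ≤ (1 - 1 / (k : ℝ)) ^ m * D) (subdIter E k m u) := by
  induction m with
  | zero => simpa [subdIter] using hu
  | succ m ih =>
    have := subd_mesh le_rfl ih
    rw [pow_succ', mul_assoc]
    exact this

end Subdivision

/-! ### The sign cochain of a ray -/

section SignCount

/-- Sorted case of `sum_sign_eq`; the sum telescopes. -/
lemma sum_sign_sorted {M : ℕ} (κ : Fin M → ℝ) (hκ : ∀ i, κ i ≠ 0) :
    ∑ i : Fin M, (if ∀ j, (j < i → 0 < κ j) ∧ (i < j → κ j < 0) then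
      ((SignType.sign (κ i) : SignType) : ℤ) else 0) =
      (if ∀ i, 0 < κ i then 1 else 0) - (if ∀ i, κ i < 0 then 1 else 0) := by
  classical
  let f : ℕ → ℤ := fun m => if ∀ j : Fin M, (j.1 < m → 0 < κ j) ∧ (m ≤ j.1 → κ j < 0) then 1 else 0
  have h : ∀ i : Fin M, (if ∀ j, (j < i → 0 < κ j) ∧ (i < j → κ j < 0) then
      ((SignType.sign (κ i) : SignType) : ℤ) else 0) = f (i.1 + 1) - f i.1 := by
    intro i
    rcases lt_or_gt_of_ne (hκ i) with hi | hi
    · have h1 : f (i.1 + 1) = 0 := by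
        refine if_neg fun h => ?_
        have := (h i).1 (Nat.lt_succ_self _)
        linarith
      have h2 : f i.1 = if ∀ j, (j < i → 0 < κ j) ∧ (i < j → κ j < 0) then 1 else 0 := by
        refine if_congr (forall_congr' fun j => and_congr Iff.rfl ?_) rfl rfl
        refine ⟨fun h hj => h (le_of_lt hj), fun h hj => ?_⟩
        rcases hj.lt_or_eq with hj | hj
        · exact h hj
        · rwa [← Fin.ext hj]
      rw [h1, h2, sign_neg hi]
      split_ifs <;> simp
    · have h1 : f i.1 = 0 := by
        refine if_neg fun h => ?_
        have := (h i).2 le_rfl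
        linarith
      have h2 : f (i.1 + 1) = if ∀ j, (j < i → 0 < κ j) ∧ (i < j → κ j < 0) then 1 else 0 := by
        refine if_congr (forall_congr' fun j => and_congr ?_ Iff.rfl) rfl rfl
        refine ⟨fun h hj => h (Nat.lt_succ_of_lt hj), fun h hj => ?_⟩
        rcases (Nat.lt_succ_iff.1 hj).lt_or_eq with hj | hj
        · exact h hj
        · rwa [Fin.ext hj]
      rw [h1, h2, sign_pos hi]
      split_ifs <;> simp
  rw [Finset.sum_congr rfl fun i _ => h i, Fin.sum_univ_eq_sum_range (fun i => f (i + 1) - f i),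
    Finset.sum_range_sub]
  congr 1
  · refine if_congr (forall_congr' fun j => ?_) rfl rfl
    simp
  · refine if_congr (forall_congr' fun j => ?_) rfl rfl
    simp

/-- A signed count of the indices `i` for which `κ j` has the sign of `t i - t j` for all `j ≠ i`. -/
lemma sum_sign_eq {M : ℕ} (κ t : Fin M → ℝ) (hκ : ∀ i, κ i ≠ 0) (ht : Function.Injective t) :
    ∑ i : Fin M, (if ∀ j, j ≠ i → 0 < κ j * (t i - t j) then
      ((SignType.sign (κ i) : SignType) : ℤ) else 0) =
      (if ∀ i, 0 < κ i then 1 else 0) - (if ∀ i, κ i < 0 then 1 else 0) := by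
  classical
  set σ := Tuple.sort t with hσ
  have hm : StrictMono (t ∘ σ) := (Tuple.monotone_sort t).strictMono_of_injective
    (ht.comp σ.injective)
  have h := sum_sign_sorted (κ ∘ σ) (fun i => hκ _)
  rw [← Equiv.sum_comp σ]
  have e1 : (∀ i, 0 < (κ ∘ σ) i) ↔ ∀ i, 0 < κ i :=
    ⟨fun h i => by simpa using h (σ.symm i), fun h i => h _⟩
  have e2 : (∀ i, (κ ∘ σ) i < 0) ↔ ∀ i, κ i < 0 :=
    ⟨fun h i => by simpa using h (σ.symm i), fun h i => h _⟩
  simp only [e1, e2] at h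
  rw [← h]
  refine Finset.sum_congr rfl fun i _ => if_congr ?_ rfl rfl
  have e3 : ∀ j, κ (σ j) * (t (σ i) - t (σ j)) = (κ ∘ σ) j * ((t ∘ σ) i - (t ∘ σ) j) :=
    fun _ => rfl
  constructor
  · intro h j
    refine ⟨fun hj => ?_, fun hj => ?_⟩
    · have := h (σ j) (fun e => hj.ne (σ.injective e))
      rw [e3] at this
      have h2 := hm hj
      by_contra h3
      push Not at h3
      nlinarith
    · have := h (σ j) (fun e => hj.ne' (σ.injective e))
      rw [e3] at this
      have h2 := hm hj
      by_contra h3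
      push Not at h3
      nlinarith
  · intro h j hj
    obtain ⟨j, rfl⟩ := σ.surjective j
    rw [e3]
    have hj' : j ≠ i := fun e => hj (by rw [e])
    rcases lt_or_gt_of_ne hj' with hj | hj
    · exact mul_pos ((h j).1 hj) (by have := hm hj; linarith)
    · exact mul_pos_of_neg_of_neg ((h j).2 hj) (by have := hm hj; linarith)

end SignCount

section Rays

variable {A : Type*} [AddCommGroup A] [Module ℝ A] {N : ℕ}

/-- `r` lies in the convex cone spanned by `S`, modulo the subspace `Z`. -/
def InCone (Z : Submodule ℝ A) (r : A) (S : Set A) : Prop :=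
  ∃ s ∈ Submodule.span NNReal S, r - s ∈ Z

open Classical in
/-- The sign cochain of the ray through `r`: the orientation sign of the simplicial cone spanned
by `w` if this cone contains `r`, and zero otherwise. -/
noncomputable def rayCochain (Z : Submodule ℝ A) (ω : A [⋀^Fin N]→ₗ[ℝ] ℝ) (r : A)
    (w : Fin N → A) : ℤ :=
  if InCone Z r (Set.range w) then ((SignType.sign (ω w) : SignType) : ℤ) else 0

/-- The coefficients of the linear relation modulo `Z` between `N + 1` vectors. -/
def relCoeff (ω : A [⋀^Fin N]→ₗ[ℝ] ℝ) (v : Fin (N + 1) → A) (i : Fin (N + 1)) : ℝ :=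
  (-1 : ℝ) ^ (i : ℕ) * ω (i.removeNth v)

open Classical in
/-- The degree of an `N`-simplex around the origin: `±1` if the linear relation between the
vertices has all its coefficients of the sign `±`, and zero otherwise. -/
noncomputable def originDegree (ω : A [⋀^Fin N]→ₗ[ℝ] ℝ) (v : Fin (N + 1) → A) : ℤ :=
  (if ∀ i, 0 < relCoeff ω v i then 1 else 0) - (if ∀ i, relCoeff ω v i < 0 then 1 else 0)

variable {Z : Submodule ℝ A} {ω : A [⋀^Fin N]→ₗ[ℝ] ℝ} {r : A}

lemma cramer (hZ : ∀ v k, ∀ c ∈ Z, ω (Function.update v k c) = 0) {w : Fin N → A} {μ : Fin N → ℝ}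
    (h : r - ∑ k, μ k • w k ∈ Z) (k : Fin N) : ω (Function.update w k r) = μ k * ω w := by
  have e : r = ∑ k, μ k • w k + (r - ∑ k, μ k • w k) := by abel
  rw [e, ω.map_update_add, hZ _ _ _ h, add_zero, ω.map_update_sum, Finset.sum_eq_single k]
  · rw [ω.map_update_smul, Function.update_eq_self, smul_eq_mul]
  · intro j _ hj
    rw [ω.map_update_smul, ω.map_update_self _ (Ne.symm hj), smul_zero]
  · simp

lemma inCone_iff (hZ : ∀ v k, ∀ c ∈ Z, ω (Function.update v k c) = 0) {w : Fin N → A}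
    (hw : ω w ≠ 0) {μ : Fin N → ℝ} (h : r - ∑ k, μ k • w k ∈ Z) :
    InCone Z r (Set.range w) ↔ ∀ k, 0 ≤ μ k := by
  constructor
  · rintro ⟨s, hs, hrs⟩ k
    obtain ⟨c, rfl⟩ := (Submodule.mem_span_range_iff_exists_fun NNReal).1 hs
    have h' : r - ∑ k, ((c k : ℝ)) • w k ∈ Z := hrs
    have := (cramer hZ h k).symm.trans (cramer hZ h' k)
    rw [mul_right_cancel₀ hw this]
    exact (c k).2
  · intro hμ
    refine ⟨_, (Submodule.mem_span_range_iff_exists_fun NNReal).2 ⟨fun k => ⟨μ k, hμ k⟩, rfl⟩, h⟩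

/-- The vectors `v i` with coefficients `relCoeff` satisfy a linear relation modulo `Z`. -/
lemma relCoeff_relation (hZ : ∀ v k, ∀ c ∈ Z, ω (Function.update v k c) = 0)
    (hspan : ∀ v, ω v ≠ 0 → ∀ r, ∃ μ : Fin N → ℝ, r - ∑ k, μ k • v k ∈ Z)
    {v : Fin (N + 1) → A} (hv : ω ((0 : Fin (N + 1)).removeNth v) ≠ 0) :
    ∑ i, relCoeff ω v i • v i ∈ Z := by
  obtain ⟨μ, hμ⟩ := hspan _ hv (v 0)
  have hc : ∀ k : Fin N, relCoeff ω v k.succ = - (μ k * relCoeff ω v 0) := by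
    intro k
    have h1 := cramer hZ hμ k
    have h2 := ω.neg_one_pow_smul_map_removeNth_add_eq_zero_of_eq
      (v := Function.update v k.succ (v 0)) (i := 0) (j := k.succ) (by
        rw [Function.update_self, Function.update_of_ne (Fin.succ_ne_zero k).symm])
        (Fin.succ_ne_zero k).symm
    have h3 : (0 : Fin (N + 1)).removeNth (Function.update v k.succ (v 0)) =
        Function.update ((0 : Fin (N + 1)).removeNth v) k (v 0) := by
      ext j
      simp only [Fin.removeNth, Fin.zero_succAbove, Function.update_apply, Fin.succ_inj]
    have h4 : (k.succ).removeNth (Function.update v k.succ (v 0)) = (k.succ).removeNth v := by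
      ext j
      simp only [Fin.removeNth, Function.update_of_ne (Fin.succAbove_ne _ _)]
    rw [h3, h4, h1] at h2
    simp only [Fin.val_zero, pow_zero, one_smul, zsmul_eq_mul] at h2
    simp only [relCoeff, Fin.val_zero, pow_zero, one_mul]
    push_cast at h2
    linarith
  have e : ∑ i, relCoeff ω v i • v i = relCoeff ω v 0 •
      (v 0 - ∑ k, μ k • (0 : Fin (N + 1)).removeNth v k) := by
    rw [Fin.sum_univ_succ, smul_sub, Finset.smul_sum, sub_eq_add_neg, ← Finset.sum_neg_distrib]
    congr 1
    refine Finset.sum_congr rfl fun k _ => ?_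
    rw [hc, neg_smul, smul_smul, mul_comm]
    simp [Fin.removeNth]
  rw [e]
  exact Z.smul_mem _ hμ

/-- For vertices in general position with respect to `r`, the coboundary of the sign cochain of `r`
is the degree around the origin; in particular it does not depend on `r`. -/
lemma coboundary_eq_of_generic (hZ : ∀ v k, ∀ c ∈ Z, ω (Function.update v k c) = 0)
    (hspan : ∀ v, ω v ≠ 0 → ∀ r, ∃ μ : Fin N → ℝ, r - ∑ k, μ k • v k ∈ Z)
    {v : Fin (N + 1) → A} (hv : ∀ i : Fin (N + 1), ω (i.removeNth v) ≠ 0)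
    (hr : ∀ (i : Fin (N + 1)) k, ω (Function.update (i.removeNth v) k r) ≠ 0) :
    ∑ i : Fin (N + 1), (-1 : ℤ) ^ (i : ℕ) * rayCochain Z ω r (i.removeNth v) =
      originDegree ω v := by
  classical
  have hrel := relCoeff_relation hZ hspan (hv 0)
  have hκ : ∀ i, relCoeff ω v i ≠ 0 := fun i => mul_ne_zero (by positivity) (hv i)
  obtain ⟨l, hl⟩ : ∃ l : Fin (N + 1) → ℝ, r - ∑ i, l i • v i ∈ Z := by
    obtain ⟨μ, hμ⟩ := hspan _ (hv 0) r
    refine ⟨Fin.cons 0 μ, ?_⟩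
    rw [Fin.sum_univ_succ]
    simpa [Fin.removeNth] using hμ
  set κ := relCoeff ω v with hκd
  set t : Fin (N + 1) → ℝ := fun i => - l i / κ i with htd
  have hcoef : ∀ i j, l j + t i * κ j = κ j * (t i - t j) := by
    intro i j
    simp only [htd]
    field_simp [hκ j, hκ i]
    ring
  -- subtracting a multiple of the relation removes the vertex `i` from the expansion of `r`
  have hexp : ∀ i : Fin (N + 1), r - ∑ k : Fin N, (κ (i.succAbove k) * (t i - t (i.succAbove k))) •
      i.removeNth v k ∈ Z := by
    intro i
    have h1 := Z.sub_mem hl (Z.smul_mem (t i) hrel)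
    have h2 : r - ∑ j, l j • v j - t i • ∑ j, κ j • v j =
        r - ∑ j, (κ j * (t i - t j)) • v j := by
      rw [Finset.smul_sum, sub_sub, ← Finset.sum_add_distrib]
      congr 1
      refine Finset.sum_congr rfl fun j _ => ?_
      rw [smul_smul, ← add_smul, hcoef]
    rw [h2, Fin.sum_univ_succAbove _ i] at h1
    simpa [Fin.removeNth] using h1
  have hne : ∀ i j, j ≠ i → κ j * (t i - t j) ≠ 0 := by
    intro i j hj
    obtain ⟨k, rfl⟩ := Fin.exists_succAbove_eq hj
    have := hr i k
    rw [cramer hZ (hexp i) k] at this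
    exact left_ne_zero_of_mul this
  have ht : Function.Injective t := by
    intro i j hij
    by_contra hne'
    exact hne i j (Ne.symm hne') (by rw [hij]; simp)
  have := sum_sign_eq κ t hκ ht
  have h5 : originDegree ω v =
      (if ∀ i, 0 < κ i then 1 else 0) - (if ∀ i, κ i < 0 then 1 else 0) := by
    unfold originDegree
    congr
  rw [h5, ← this]
  refine Finset.sum_congr rfl fun i _ => ?_
  have hc : InCone Z r (Set.range (i.removeNth v)) ↔ ∀ j, j ≠ i → 0 < κ j * (t i - t j) := by
    rw [inCone_iff hZ (hv i) (hexp i)]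
    constructor
    · intro h j hj
      have h0 := hne i j hj
      obtain ⟨k, rfl⟩ := Fin.exists_succAbove_eq hj
      exact lt_of_le_of_ne (h k) h0.symm
    · intro h k
      exact (h _ (Fin.succAbove_ne i k)).le
  have hs : ((SignType.sign (κ i) : SignType) : ℤ) =
      (-1 : ℤ) ^ (i : ℕ) * ((SignType.sign (ω (i.removeNth v)) : SignType) : ℤ) := by
    simp only [hκd, relCoeff, sign_mul]
    rcases Nat.even_or_odd (i : ℕ) with h | h
    · simp [h.neg_one_pow]
    · simp [h.neg_one_pow]
  rw [rayCochain]
  by_cases h : InCone Z r (Set.range (i.removeNth v))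
  · rw [if_pos h, if_pos (hc.1 h), hs]
  · rw [if_neg h, if_neg (fun h' => h (hc.2 h')), mul_zero]

/-- Degenerate simplices: both sides of the coboundary formula vanish. -/
lemma coboundary_eq_of_not_injective {v : Fin (N + 1) → A} (hv : ¬ Function.Injective v) :
    ∑ i : Fin (N + 1), (-1 : ℤ) ^ (i : ℕ) * rayCochain Z ω r (i.removeNth v) = 0 ∧
      originDegree ω v = 0 := by
  classical
  simp only [Function.Injective, not_forall] at hv
  obtain ⟨a, b, hab, hne⟩ := hv
  have h0 := ω.neg_one_pow_smul_map_removeNth_add_eq_zero_of_eq hab hne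
  have h0' : relCoeff ω v a + relCoeff ω v b = 0 := by
    simp only [zsmul_eq_mul] at h0
    push_cast at h0
    exact h0
  constructor
  · have hz : ∀ i, i ≠ a → i ≠ b → ω (i.removeNth v) = 0 := by
      intro i hia hib
      obtain ⟨a', rfl⟩ := Fin.exists_succAbove_eq hia.symm
      obtain ⟨b', rfl⟩ := Fin.exists_succAbove_eq hib.symm
      exact ω.map_eq_zero_of_eq _ (i := a') (j := b') hab (fun e => hne (by rw [e]))
    rw [← Finset.add_sum_erase _ _ (Finset.mem_univ a), ← Finset.add_sum_erase _ _
      (Finset.mem_erase.2 ⟨Ne.symm hne, Finset.mem_univ b⟩), Finset.sum_eq_zero, add_zero]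
    · have hr' : ∀ c d, v c = v d → Set.range (c.removeNth v) ⊆ Set.range (d.removeNth v) := by
        rintro c d hcd _ ⟨k, rfl⟩
        by_cases hk : c.succAbove k = d
        · have hdc : c ≠ d := fun e => Fin.succAbove_ne c k (hk.trans e.symm)
          obtain ⟨k', hk'⟩ := Fin.exists_succAbove_eq hdc
          exact ⟨k', by simp [Fin.removeNth, hk', hk, hcd]⟩
        · obtain ⟨k', hk'⟩ := Fin.exists_succAbove_eq hk
          exact ⟨k', by simp [Fin.removeNth, hk']⟩
      have hr : Set.range (a.removeNth v) = Set.range (b.removeNth v) :=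
        (hr' a b hab).antisymm (hr' b a hab.symm)
      simp only [rayCochain, hr]
      split_ifs
      · have hs : ∀ i : Fin (N + 1), (-1 : ℤ) ^ (i : ℕ) *
            ((SignType.sign (ω (i.removeNth v)) : SignType) : ℤ) =
            ((SignType.sign (relCoeff ω v i) : SignType) : ℤ) := by
          intro i
          simp only [relCoeff, sign_mul]
          rcases Nat.even_or_odd (i : ℕ) with h | h
          · simp [h.neg_one_pow]
          · simp [h.neg_one_pow]
        rw [hs, hs, eq_neg_of_add_eq_zero_left h0', Left.sign_neg]
        simp
      · simp
    · intro i hi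
      simp only [Finset.mem_erase, Finset.mem_univ, and_true] at hi
      simp [rayCochain, hz i hi.2 hi.1]
  · unfold originDegree
    rw [if_neg, if_neg, sub_zero]
    · intro h; linarith [h a, h b]
    · intro h; linarith [h a, h b]

lemma originDegree_map {g : A → A} {s : ℤ} (hs : s = 1 ∨ s = -1)
    (hg : ∀ w : Fin N → A, ω (g ∘ w) = s * ω w) (v : Fin (N + 1) → A) :
    originDegree ω (g ∘ v) = s * originDegree ω v := by
  have h : ∀ i, relCoeff ω (g ∘ v) i = s * relCoeff ω v i := by
    intro i
    have : i.removeNth (g ∘ v) = g ∘ i.removeNth v := rfl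
    rw [relCoeff, this, hg, relCoeff]
    ring
  unfold originDegree
  rcases hs with rfl | rfl
  · simp [h]
  · simp only [h]
    simp

/-- A simplex contained in an open half space does not enclose the origin. -/
lemma originDegree_eq_zero (hZ : ∀ v k, ∀ c ∈ Z, ω (Function.update v k c) = 0)
    (hspan : ∀ v, ω v ≠ 0 → ∀ r, ∃ μ : Fin N → ℝ, r - ∑ k, μ k • v k ∈ Z)
    {l : A →ₗ[ℝ] ℝ} (hl : ∀ c ∈ Z, l c = 0) {v : Fin (N + 1) → A} (hv : ∀ i, 0 < l (v i)) :
    originDegree ω v = 0 := by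
  have key : relCoeff ω v 0 ≠ 0 → ∑ i, relCoeff ω v i * l (v i) = 0 := by
    intro h
    have h1 := hl _ (relCoeff_relation hZ hspan (v := v) (by simpa [relCoeff] using h))
    simpa [map_sum] using h1
  unfold originDegree
  rw [if_neg, if_neg, sub_zero]
  · intro h
    have := key (h 0).ne
    have h2 : ∑ i, relCoeff ω v i * l (v i) < 0 :=
      Finset.sum_neg (fun i _ => mul_neg_of_neg_of_pos (h i) (hv i)) ⟨0, Finset.mem_univ _⟩
    linarith
  · intro h
    have := key (h 0).ne'
    have h2 : 0 < ∑ i, relCoeff ω v i * l (v i) :=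
      Finset.sum_pos (fun i _ => mul_pos (h i) (hv i)) ⟨0, Finset.mem_univ _⟩
    linarith

end Rays

/-! ### The determinant form on label matrices -/

section Labels

/-- Label matrices, with rows indexed by the measures and columns by the parts. The number of
parts is `Q + 1`. -/
abbrev Lab (n Q : ℕ) := Fin n × Fin (Q + 1) → ℝ

variable {n Q : ℕ}

/-- The indicator of the `i`-th row. -/
def rowInd (n Q : ℕ) (i : Fin n) : Lab n Q := fun p => if p.1 = i then 1 else 0

/-- Label matrices with constant rows. -/
def constRows (n Q : ℕ) : Submodule ℝ (Lab n Q) where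
  carrier := {c | ∃ x : Fin n → ℝ, ∀ p, c p = x p.1}
  add_mem' := by
    rintro a b ⟨x, hx⟩ ⟨y, hy⟩
    exact ⟨x + y, fun p => by simp [hx, hy]⟩
  zero_mem' := ⟨0, fun p => rfl⟩
  smul_mem' := by
    rintro t a ⟨x, hx⟩
    exact ⟨t • x, fun p => by simp [hx]⟩

lemma mem_constRows {c : Lab n Q} : c ∈ constRows n Q ↔ ∃ x : Fin n → ℝ, ∀ p, c p = x p.1 := Iff.rfl

lemma sum_smul_rowInd (x : Fin n → ℝ) (p : Fin n × Fin (Q + 1)) :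
    (∑ i, x i • rowInd n Q i) p = x p.1 := by
  simp [rowInd]

/-- An arbitrary numbering of the columns of the determinant `omega`. -/
noncomputable def colEquiv (n Q : ℕ) : Fin n × Fin (Q + 1) ≃ Fin (n * Q) ⊕ Fin n :=
  Fintype.equivOfCardEq (by simp; ring)

/-- The square matrix whose rows are the labels `v`, followed by the row indicators. -/
noncomputable def rowMat (v : Fin (n * Q) → Lab n Q) :
    Matrix (Fin (n * Q) ⊕ Fin n) (Fin (n * Q) ⊕ Fin n) ℝ :=
  Matrix.of fun a b => Sum.elim v (rowInd n Q) a ((colEquiv n Q).symm b)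

lemma rowMat_update (v : Fin (n * Q) → Lab n Q) (k : Fin (n * Q)) (x : Lab n Q) :
    rowMat (Function.update v k x) =
      (rowMat v).updateRow (Sum.inl k) (fun b => x ((colEquiv n Q).symm b)) := by
  ext a b
  rw [Matrix.updateRow_apply]
  rcases a with a | a
  · by_cases h : a = k
    · subst h
      simp only [rowMat, Matrix.of_apply, Sum.elim_inl, Function.update_self, if_true]
    · rw [if_neg (fun e => h (Sum.inl_injective e))]
      simp only [rowMat, Matrix.of_apply, Sum.elim_inl, Function.update_of_ne h]
  · rw [if_neg Sum.inr_ne_inl]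
    simp only [rowMat, Matrix.of_apply, Sum.elim_inr]

/-- The alternating form on `n * Q` label matrices which is a volume form modulo `constRows`. -/
noncomputable def omega (n Q : ℕ) : Lab n Q [⋀^Fin (n * Q)]→ₗ[ℝ] ℝ where
  toFun v := (rowMat v).det
  map_update_add' := by
    intro inst v k x y
    obtain rfl : inst = instDecidableEqFin _ := Subsingleton.elim _ _
    simp only [rowMat_update]
    exact Matrix.det_updateRow_add _ _ _ _
  map_update_smul' := by
    intro inst v k t x
    obtain rfl : inst = instDecidableEqFin _ := Subsingleton.elim _ _
    simp only [rowMat_update]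
    exact Matrix.det_updateRow_smul _ _ _ _
  map_eq_zero_of_eq' := by
    intro v i j hij hne
    refine Matrix.det_zero_of_row_eq (i := Sum.inl i) (j := Sum.inl j) (by simpa using hne) ?_
    ext b
    simp [rowMat, hij]

lemma omega_apply (v : Fin (n * Q) → Lab n Q) : omega n Q v = (rowMat v).det := rfl

lemma omega_constRows (v : Fin (n * Q) → Lab n Q) (k : Fin (n * Q)) :
    ∀ c ∈ constRows n Q, omega n Q (Function.update v k c) = 0 := by
  rintro c ⟨x, hx⟩
  have h : c = ∑ i, x i • rowInd n Q i := by
    ext p; rw [sum_smul_rowInd, hx]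
  rw [h, (omega n Q).map_update_sum]
  refine Finset.sum_eq_zero fun i _ => ?_
  rw [(omega n Q).map_update_smul, omega_apply]
  rw [Matrix.det_zero_of_row_eq (i := Sum.inl k) (j := Sum.inr i) (by simp), smul_zero]
  ext b
  simp only [rowMat, Matrix.of_apply, Sum.elim_inl, Sum.elim_inr, Function.update_self]

lemma vecMul_rowMat (v : Fin (n * Q) → Lab n Q) (y : Fin (n * Q) ⊕ Fin n → ℝ)
    (p : Fin n × Fin (Q + 1)) : Matrix.vecMul y (rowMat v) (colEquiv n Q p) =
      (∑ k, y (Sum.inl k) • v k) p + y (Sum.inr p.1) := by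
  rw [Matrix.vecMul_eq_sum, Fintype.sum_sum_type, Pi.add_apply]
  congr 1
  · simp [rowMat]
  · rw [← sum_smul_rowInd (Q := Q) (fun i => y (Sum.inr i))]
    simp [rowMat]

lemma omega_ne_zero_iff (v : Fin (n * Q) → Lab n Q) : omega n Q v ≠ 0 ↔
    ∀ r, ∃ μ : Fin (n * Q) → ℝ, r - ∑ k, μ k • v k ∈ constRows n Q := by
  rw [omega_apply, ← isUnit_iff_ne_zero, ← Matrix.isUnit_iff_isUnit_det,
    ← Matrix.vecMul_surjective_iff_isUnit]
  constructor
  · intro h r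
    obtain ⟨y, hy⟩ := h fun b => r ((colEquiv n Q).symm b)
    refine ⟨fun k => y (Sum.inl k), fun i => y (Sum.inr i), fun p => ?_⟩
    have := congrFun hy (colEquiv n Q p)
    simp only [vecMul_rowMat, Equiv.symm_apply_apply] at this
    simp only [Pi.sub_apply, ← this]
    ring
  · intro h r
    obtain ⟨μ, x, hx⟩ := h fun p => r (colEquiv n Q p)
    refine ⟨Sum.elim μ x, funext fun b => ?_⟩
    obtain ⟨p, rfl⟩ := (colEquiv n Q).surjective b
    have := hx p
    simp only [vecMul_rowMat, Sum.elim_inl, Sum.elim_inr]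
    simp only [Pi.sub_apply] at this
    linarith

/-- A permutation of the parts permutes the columns of a label matrix. -/
def permLab (n : ℕ) {Q : ℕ} (g : Equiv.Perm (Fin (Q + 1))) : Lab n Q →ₗ[ℝ] Lab n Q :=
  LinearMap.funLeft ℝ ℝ fun p => (p.1, g⁻¹ p.2)

@[simp] lemma permLab_apply (g : Equiv.Perm (Fin (Q + 1))) (a : Lab n Q)
    (p : Fin n × Fin (Q + 1)) : permLab n g a p = a (p.1, g⁻¹ p.2) := rfl

/-- The sign by which a permutation of the parts changes the orientation of the label space. -/
def labSign (n : ℕ) {Q : ℕ} (g : Equiv.Perm (Fin (Q + 1))) : ℤ := (Equiv.Perm.sign g : ℤ) ^ n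

lemma labSign_mul (g h : Equiv.Perm (Fin (Q + 1))) :
    labSign n (g * h) = labSign n g * labSign n h := by
  simp [labSign, mul_pow]

lemma labSign_eq (g : Equiv.Perm (Fin (Q + 1))) : labSign n g = 1 ∨ labSign n g = -1 := by
  unfold labSign
  rcases Int.units_eq_one_or (Equiv.Perm.sign g) with h | h
  · simp [h]
  · rw [h]
    simpa using neg_one_pow_eq_or ℤ n

lemma omega_perm (g : Equiv.Perm (Fin (Q + 1))) (v : Fin (n * Q) → Lab n Q) :
    omega n Q (permLab n g ∘ v) = labSign n g * omega n Q v := by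
  let σ : Equiv.Perm (Fin (n * Q) ⊕ Fin n) :=
    (colEquiv n Q).permCongr (Equiv.prodCongrRight fun _ : Fin n => g⁻¹)
  have h : rowMat (permLab n g ∘ v) = (rowMat v).submatrix id σ := by
    ext a b
    rcases a with a | a
    · simp [rowMat, σ, Equiv.permCongr_apply]; rfl
    · simp [rowMat, σ, Equiv.permCongr_apply, rowInd]
  rw [omega_apply, h, Matrix.det_permute', ← omega_apply]
  congr 1
  simp only [σ, Equiv.Perm.sign_permCongr, Equiv.Perm.sign_prodCongrRight, labSign]
  simp

lemma permLab_mul (g h : Equiv.Perm (Fin (Q + 1))) (a : Lab n Q) :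
    permLab n (g * h) a = permLab n g (permLab n h a) := by
  ext p; simp

lemma permLab_one (a : Lab n Q) : permLab n 1 a = a := by
  ext p; simp

lemma continuous_omega : Continuous fun v : Fin (n * Q) → Lab n Q => omega n Q v := by
  simp only [omega_apply]
  refine Continuous.matrix_det ?_
  refine continuous_matrix fun a b => ?_
  rcases a with a | a
  · simp only [rowMat, Matrix.of_apply, Sum.elim_inl]
    fun_prop
  · simp only [rowMat, Matrix.of_apply, Sum.elim_inr]
    exact continuous_const

lemma continuous_permLab (g : Equiv.Perm (Fin (Q + 1))) : Continuous (permLab n g) :=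
  LinearMap.continuous_of_finiteDimensional _

/-- Along the segment from `v` to `w` the form is a polynomial, nonzero at `w`. -/
lemma finite_omega_zeros (v w : Fin (n * Q) → Lab n Q) (hw : omega n Q w ≠ 0) :
    {t : ℝ | omega n Q (fun k => v k + t • (w k - v k)) = 0}.Finite := by
  let P : Polynomial ℝ :=
    (Matrix.of fun a b => (Polynomial.C (rowMat v a b) + Polynomial.X *
      Polynomial.C (rowMat w a b - rowMat v a b) : Polynomial ℝ)).det
  have hP : ∀ t, P.eval t = omega n Q (fun k => v k + t • (w k - v k)) := by
    intro t
    rw [omega_apply, ← Polynomial.coe_evalRingHom, RingHom.map_det]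
    congr 1
    ext a b
    rcases a with a | a <;> simp [rowMat]
  have hP0 : P ≠ 0 := by
    intro h
    have := hP 1
    rw [h] at this
    simp only [Polynomial.eval_zero, one_smul, add_sub_cancel] at this
    exact hw this.symm
  refine (P.roots.toFinset.finite_toSet).subset fun t ht => ?_
  simp only [Finset.mem_coe, Multiset.mem_toFinset, Polynomial.mem_roots hP0, Polynomial.IsRoot, hP]
  exact ht

/-- Generic labels: after an arbitrarily small perturbation, any `n * Q` labels at distinct indices
are linearly independent modulo `constRows`, even after permutations of their columns. -/
lemma dense_generic (I : Type*) [Fintype I] (hω : ∃ w, omega n Q w ≠ 0) :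
    Dense {y : I → Lab n Q | ∀ (j : Fin (n * Q) → I) (g : Fin (n * Q) → Equiv.Perm (Fin (Q + 1))),
      Function.Injective j → omega n Q (fun k => permLab n (g k) (y (j k))) ≠ 0} := by
  classical
  obtain ⟨e, he⟩ := hω
  let J := {p : (Fin (n * Q) → I) × (Fin (n * Q) → Equiv.Perm (Fin (Q + 1))) //
    Function.Injective p.1}
  have hset : {y : I → Lab n Q | ∀ (j : Fin (n * Q) → I)
      (g : Fin (n * Q) → Equiv.Perm (Fin (Q + 1))),
      Function.Injective j → omega n Q (fun k => permLab n (g k) (y (j k))) ≠ 0} =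
      ⋂ p : J, {y | omega n Q (fun k => permLab n (p.1.2 k) (y (p.1.1 k))) ≠ 0} := by
    ext y
    simp only [Set.mem_ofPred_eq, Set.mem_iInter]
    exact ⟨fun h p => h _ _ p.2, fun h j g hj => h ⟨(j, g), hj⟩⟩
  rw [hset]
  refine dense_iInter_of_isOpen (fun p => ?_) fun p => ?_
  · refine isOpen_ne_fun ?_ continuous_const
    refine continuous_omega.comp (continuous_pi fun k => ?_)
    exact (continuous_permLab _).comp (continuous_apply _)
  · intro y
    let w : I → Lab n Q := fun i => if h : ∃ k, p.1.1 k = i then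
      permLab n (p.1.2 h.choose)⁻¹ (e h.choose) else 0
    have hw : ∀ k, permLab n (p.1.2 k) (w (p.1.1 k)) = e k := by
      intro k
      have h : ∃ k', p.1.1 k' = p.1.1 k := ⟨k, rfl⟩
      have h2 : h.choose = k := p.2 h.choose_spec
      simp only [w, dif_pos h, h2, ← permLab_mul, mul_inv_cancel, permLab_one]
    have hfin := finite_omega_zeros (fun k => permLab n (p.1.2 k) (y (p.1.1 k))) e he
    have h0 := (hfin.countable.dense_compl ℝ) 0
    have hcont : Continuous fun t : ℝ => y + t • (w - y) := by fun_prop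
    have := map_mem_closure hcont h0 (t := {y | omega n Q (fun k => permLab n (p.1.2 k)
      (y (p.1.1 k))) ≠ 0}) (fun t ht => by
        simp only [Set.mem_compl_iff, Set.mem_ofPred_eq] at ht ⊢
        simpa [map_add, map_sub, map_smul, hw] using ht)
    simpa using this

end Labels

/-! ### Configurations of affine functions and monotone cells -/

section Configurations

/-- A configuration of `Q + 1` affine functions on `ℝⁿ`: `p.1 (i, j)` is the `i`-th coefficient of
the `j`-th function and `p.2 j` is its constant term. -/
abbrev Config (n Q : ℕ) := Lab n Q × (Fin (Q + 1) → ℝ)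

variable {n Q : ℕ}

lemma perm_inv_apply_self {α : Type*} (g : Equiv.Perm α) (a : α) : g⁻¹ (g a) = a :=
  g.symm_apply_apply a

lemma perm_apply_inv_self {α : Type*} (g : Equiv.Perm α) (a : α) : g (g⁻¹ a) = a :=
  g.apply_symm_apply a

/-- Permutation of the functions of a configuration. -/
def permConfig (n : ℕ) {Q : ℕ} (g : Equiv.Perm (Fin (Q + 1))) : Config n Q →ₗ[ℝ] Config n Q :=
  (permLab n g).prodMap (LinearMap.funLeft ℝ ℝ fun j => g⁻¹ j)

lemma permConfig_fst (g : Equiv.Perm (Fin (Q + 1))) (p : Config n Q) (i : Fin n)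
    (j : Fin (Q + 1)) : (permConfig n g p).1 (i, j) = p.1 (i, g⁻¹ j) := rfl

lemma permConfig_snd (g : Equiv.Perm (Fin (Q + 1))) (p : Config n Q)
    (j : Fin (Q + 1)) : (permConfig n g p).2 j = p.2 (g⁻¹ j) := rfl

lemma permConfig_mul (g h : Equiv.Perm (Fin (Q + 1))) (p : Config n Q) :
    permConfig n (g * h) p = permConfig n g (permConfig n h p) := by
  refine Prod.ext ?_ ?_
  · exact permLab_mul g h p.1
  · funext j; simp [permConfig_snd]

lemma permConfig_one (p : Config n Q) : permConfig n 1 p = p := by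
  refine Prod.ext ?_ ?_
  · exact permLab_one p.1
  · funext j; simp [permConfig_snd]

/-- The functions of the configuration are pairwise distinct. -/
def Distinct (p : Config n Q) : Prop :=
  ∀ j l, (∀ i, p.1 (i, j) = p.1 (i, l)) → p.2 j = p.2 l → j = l

/-- The cell of configurations whose `i`-th coefficients are ordered by `τ i`, with ties in all
coefficients broken by the constant terms, according to the ranking `σ`. -/
def cell (σ : Equiv.Perm (Fin (Q + 1))) (τ : Fin n → Equiv.Perm (Fin (Q + 1))) :
    Set (Config n Q) :=
  {p | (∀ i, Monotone fun k => p.1 (i, τ i k)) ∧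
    ∀ j j', (∀ i, p.1 (i, j) = p.1 (i, j')) → σ j < σ j' → p.2 j < p.2 j'}

lemma cell_convex (σ : Equiv.Perm (Fin (Q + 1))) (τ : Fin n → Equiv.Perm (Fin (Q + 1))) :
    Convex ℝ (cell σ τ) := by
  rw [convex_iff_forall_pos]
  intro p hp p' hp' a b ha hb hab
  refine ⟨fun i k k' hk => ?_, fun j j' hjj hσ => ?_⟩
  · have h1 := hp.1 i hk
    have h2 := hp'.1 i hk
    simp only [Prod.fst_add, Prod.smul_fst, Pi.add_apply, Pi.smul_apply, smul_eq_mul] at h1 h2 ⊢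
    gcongr
  · have key : ∀ i, p.1 (i, j) = p.1 (i, j') ∧ p'.1 (i, j) = p'.1 (i, j') := by
      intro i
      have h := hjj i
      simp only [Prod.fst_add, Prod.smul_fst, Pi.add_apply, Pi.smul_apply, smul_eq_mul] at h
      obtain ⟨k, rfl⟩ := (τ i).surjective j
      obtain ⟨k', rfl⟩ := (τ i).surjective j'
      rcases le_total k k' with hk | hk
      · have h1 := hp.1 i hk
        have h2 := hp'.1 i hk
        simp only at h1 h2
        constructor <;> nlinarith
      · have h1 := hp.1 i hk
        have h2 := hp'.1 i hk
        simp only at h1 h2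
        constructor <;> nlinarith
    have h1 := hp.2 j j' (fun i => (key i).1) hσ
    have h2 := hp'.2 j j' (fun i => (key i).2) hσ
    simp only [Prod.snd_add, Prod.smul_snd, Pi.add_apply, Pi.smul_apply, smul_eq_mul]
    gcongr

lemma cell_distinct {σ : Equiv.Perm (Fin (Q + 1))} {τ : Fin n → Equiv.Perm (Fin (Q + 1))}
    {p : Config n Q} (hp : p ∈ cell σ τ) : Distinct p := by
  intro j j' h1 h2
  by_contra hne
  rcases lt_or_gt_of_ne (σ.injective.ne hne) with h | h
  · exact (hp.2 j j' h1 h).ne h2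
  · exact (hp.2 j' j (fun i => (h1 i).symm) h).ne' h2

lemma permConfig_distinct {p : Config n Q} (hp : Distinct p) (g : Equiv.Perm (Fin (Q + 1))) :
    Distinct (permConfig n g p) := by
  intro j j' h1 h2
  exact g⁻¹.injective (hp _ _ h1 h2)

lemma permConfig_free {p : Config n Q} (hp : Distinct p) {g : Equiv.Perm (Fin (Q + 1))}
    (h : permConfig n g p = p) : g = 1 := by
  rw [← inv_eq_one]
  ext1 j
  refine hp _ _ (fun i => ?_) ?_
  · rw [← permConfig_fst, h]; rfl
  · rw [← permConfig_snd, h]; rfl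

lemma permConfig_mem_cell {σ : Equiv.Perm (Fin (Q + 1))} {τ : Fin n → Equiv.Perm (Fin (Q + 1))}
    {p : Config n Q} (hp : p ∈ cell σ τ) (g : Equiv.Perm (Fin (Q + 1))) :
    permConfig n g p ∈ cell (σ * g⁻¹) (fun i => g * τ i) := by
  refine ⟨fun i k k' hk => ?_, fun j j' h1 h2 => ?_⟩
  · simp only [permConfig_fst, Equiv.Perm.mul_apply, perm_inv_apply_self]
    exact hp.1 i hk
  · exact hp.2 _ _ h1 h2

/-- A cell contains at most one point of each orbit. -/
lemma cell_free {σ : Equiv.Perm (Fin (Q + 1))} {τ : Fin n → Equiv.Perm (Fin (Q + 1))}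
    {p : Config n Q} (hp : p ∈ cell σ τ) {g : Equiv.Perm (Fin (Q + 1))}
    (hg : permConfig n g p ∈ cell σ τ) : g = 1 := by
  -- the coefficients are unchanged, since a family has only one monotone rearrangement
  have hy : ∀ i j, p.1 (i, g⁻¹ j) = p.1 (i, j) := by
    intro i j
    have h1 : Monotone ((fun j => p.1 (i, j)) ∘ (τ i)) := hp.1 i
    have h2 : Monotone ((fun j => p.1 (i, j)) ∘ (g⁻¹ * τ i)) := hg.1 i
    have h3 := congrFun (Tuple.unique_monotone h2 h1) ((τ i).symm j)
    simpa using h3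
  by_contra hne
  have hS : (Finset.univ.filter fun j => g⁻¹ j ≠ j).Nonempty := by
    by_contra h
    rw [Finset.not_nonempty_iff_eq_empty, Finset.filter_eq_empty_iff] at h
    apply hne
    rw [← inv_eq_one]
    ext1 j
    simpa using h (Finset.mem_univ j)
  obtain ⟨j, hj, hmin⟩ := Finset.exists_min_image _ σ hS
  simp only [Finset.mem_filter, Finset.mem_univ, true_and] at hj hmin
  have hyg : ∀ i, p.1 (i, g j) = p.1 (i, j) := fun i => by
    have := hy i (g j)
    simpa using this.symm
  have hgj : g j ≠ j := fun e => hj (by rw [Equiv.Perm.inv_eq_iff_eq, e])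
  have hm1 : σ j < σ (g j) := lt_of_le_of_ne
    (hmin _ (by rw [perm_inv_apply_self]; exact hgj.symm)) (σ.injective.ne hgj.symm)
  have hm2 : σ j < σ (g⁻¹ j) := lt_of_le_of_ne
    (hmin _ (fun e => hj (g⁻¹.injective e))) (σ.injective.ne hj.symm)
  have h1 := hg.2 j (g j) (fun i => by
    rw [permConfig_fst, permConfig_fst, perm_inv_apply_self, hy]) hm1
  rw [permConfig_snd, permConfig_snd, perm_inv_apply_self] at h1
  have h2 := hp.2 j (g⁻¹ j) (fun i => (hy i j).symm) hm2
  linarith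

/-! ### Flags -/

/-- The coefficients of the `r`-th vertex of the flag `(τ, π)`: the first `r` elements
`(i, k)` in the order `π` each add `1` to the `i`-th coefficients of all functions placed after
position `k` by `τ i`. -/
def flagLab (τ : Fin n → Equiv.Perm (Fin (Q + 1))) (π : Equiv.Perm (Fin (n * Q))) (r : ℕ) :
    Lab n Q := fun p => ∑ k : Fin Q,
  if (π⁻¹ (finProdFinEquiv (p.1, k)) : ℕ) < r ∧ (k : ℕ) < ((τ p.1)⁻¹ p.2 : Fin (Q + 1)) then 1 else 0

open Classical in
/-- Constant terms separating functions with equal coefficients, according to the ranking `σ`. -/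
noncomputable def tieBreak (σ : Equiv.Perm (Fin (Q + 1))) (y : Lab n Q) : Fin (Q + 1) → ℝ := fun j =>
  (Finset.univ.filter fun j' => (∀ i, y (i, j') = y (i, j)) ∧ σ j' < σ j).card

/-- The `r`-th vertex of the flag `(τ, π)` with ties broken by `σ`. -/
noncomputable def flagPt (σ : Equiv.Perm (Fin (Q + 1))) (τ : Fin n → Equiv.Perm (Fin (Q + 1)))
    (π : Equiv.Perm (Fin (n * Q))) (r : ℕ) : Config n Q :=
  (flagLab τ π r, tieBreak σ (flagLab τ π r))

lemma permLab_flagLab (g : Equiv.Perm (Fin (Q + 1))) (τ : Fin n → Equiv.Perm (Fin (Q + 1)))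
    (π : Equiv.Perm (Fin (n * Q))) (r : ℕ) :
    permLab n g (flagLab τ π r) = flagLab (fun i => g * τ i) π r := by
  ext p
  simp [flagLab]

lemma permConfig_flagPt (σ g : Equiv.Perm (Fin (Q + 1))) (τ : Fin n → Equiv.Perm (Fin (Q + 1)))
    (π : Equiv.Perm (Fin (n * Q))) (r : ℕ) :
    permConfig n g (flagPt σ τ π r) = flagPt (σ * g⁻¹) (fun i => g * τ i) π r := by
  refine Prod.ext (permLab_flagLab g τ π r) ?_
  funext j
  simp only [permConfig_snd, flagPt, ← permLab_flagLab]
  unfold tieBreak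
  rw [Nat.cast_inj]
  refine Finset.card_bij (fun j' _ => g j') ?_ ?_ ?_
  · intro a ha
    rw [Finset.mem_filter] at ha ⊢
    simpa [perm_inv_apply_self] using ha
  · intro a _ b _ h
    exact g.injective h
  · intro b hb
    refine ⟨g⁻¹ b, ?_, perm_apply_inv_self g b⟩
    rw [Finset.mem_filter] at hb ⊢
    simpa using hb

lemma flagLab_monotone (τ : Fin n → Equiv.Perm (Fin (Q + 1))) (π : Equiv.Perm (Fin (n * Q)))
    (r : ℕ) (i : Fin n) : Monotone fun k => flagLab τ π r (i, τ i k) := by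
  intro k k' hk
  simp only [flagLab, perm_inv_apply_self]
  refine Finset.sum_le_sum fun l _ => ?_
  have hk' : (k : ℕ) ≤ k' := hk
  split_ifs with h1 h2
  · exact le_rfl
  · exact absurd ⟨h1.1, h1.2.trans_le hk'⟩ h2
  · exact zero_le_one
  · exact le_rfl

lemma tieBreak_lt (σ : Equiv.Perm (Fin (Q + 1))) (y : Lab n Q) {j j' : Fin (Q + 1)}
    (h : ∀ i, y (i, j) = y (i, j')) (hσ : σ j < σ j') : tieBreak σ y j < tieBreak σ y j' := by
  classical
  unfold tieBreak
  rw [Nat.cast_lt]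
  refine Finset.card_lt_card ?_
  rw [Finset.ssubset_iff_of_subset]
  · refine ⟨j, by simpa using ⟨h, hσ⟩, by simp⟩
  · intro a ha
    simp only [Finset.mem_filter, Finset.mem_univ, true_and] at ha ⊢
    exact ⟨fun i => (ha.1 i).trans (h i), ha.2.trans hσ⟩

lemma flagPt_mem_cell (σ : Equiv.Perm (Fin (Q + 1))) (τ : Fin n → Equiv.Perm (Fin (Q + 1)))
    (π : Equiv.Perm (Fin (n * Q))) (r : ℕ) : flagPt σ τ π r ∈ cell σ τ :=
  ⟨flagLab_monotone τ π r, fun _ _ h hσ => tieBreak_lt σ _ h hσ⟩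

end Configurations

/-! ### The equivariant cycle of flags modulo its facets at infinity -/

section Cycle

variable {n Q : ℕ}

/-- The orientation sign of a flag. -/
def flagSign (τ : Fin n → Equiv.Perm (Fin (Q + 1))) (π : Equiv.Perm (Fin (n * Q))) : ℤ :=
  (Equiv.Perm.sign π : ℤ) * ∏ i, (Equiv.Perm.sign (τ i) : ℤ)

/-- The full simplex of a flag. -/
noncomputable def flagTuple (σ : Equiv.Perm (Fin (Q + 1))) (τ : Fin n → Equiv.Perm (Fin (Q + 1)))
    (π : Equiv.Perm (Fin (n * Q))) : Fin (n * Q + 1) → Config n Q := fun r => flagPt σ τ π r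

/-- The facet of a flag simplex opposite to its vertex with vanishing coefficients. -/
noncomputable def flagFacet (σ : Equiv.Perm (Fin (Q + 1))) (τ : Fin n → Equiv.Perm (Fin (Q + 1)))
    (π : Equiv.Perm (Fin (n * Q))) : Fin (n * Q) → Config n Q := fun r => flagPt σ τ π (r + 1)

variable (n Q) in
/-- The signed sum of all flag simplices: a cone over a subdivided sphere. -/
noncomputable def flagChain : Chain (Config n Q) (n * Q + 1) :=
  ∑ τ : Fin n → Equiv.Perm (Fin (Q + 1)), ∑ π : Equiv.Perm (Fin (n * Q)),
    flagSign τ π • sx (flagTuple 1 τ π)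

lemma flagLab_mul_swap (τ : Fin n → Equiv.Perm (Fin (Q + 1))) (π : Equiv.Perm (Fin (n * Q)))
    {a b : Fin (n * Q)} (hab : (b : ℕ) = a + 1) {r : ℕ} (hr : r ≠ b) :
    flagLab τ (π * Equiv.swap a b) r = flagLab τ π r := by
  have h : ∀ x : Fin (n * Q), (((π * Equiv.swap a b)⁻¹ x : Fin (n * Q)) : ℕ) < r ↔
      ((π⁻¹ x : Fin (n * Q)) : ℕ) < r := by
    intro x
    rw [mul_inv_rev, Equiv.Perm.mul_apply, Equiv.swap_inv]
    rw [Equiv.swap_apply_def]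
    split_ifs with h1 h2
    · rw [h1]; omega
    · rw [h2]; omega
    · rfl
  ext p
  simp only [flagLab, h]

lemma flagLab_mul_mulSingle (τ : Fin n → Equiv.Perm (Fin (Q + 1))) (π : Equiv.Perm (Fin (n * Q)))
    {a : Fin (n * Q)} {i₀ : Fin n} {k₀ : Fin Q} (ha : π a = finProdFinEquiv (i₀, k₀)) {r : ℕ}
    (hr : r ≤ a) :
    flagLab (τ * Pi.mulSingle i₀ (Equiv.swap k₀.castSucc k₀.succ)) π r = flagLab τ π r := by
  ext ⟨i, j⟩
  simp only [flagLab]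
  refine Finset.sum_congr rfl fun k _ => if_congr (and_congr_right fun h => ?_) rfl rfl
  by_cases hi : i = i₀
  · subst hi
    have hk : k ≠ k₀ := by
      rintro rfl
      rw [← ha, perm_inv_apply_self] at h
      omega
    have hk' : (k : ℕ) ≠ k₀ := fun e => hk (Fin.ext e)
    rw [Pi.mul_apply, Pi.mulSingle_eq_same, mul_inv_rev, Equiv.Perm.mul_apply, Equiv.swap_inv,
      Equiv.swap_apply_def]
    split_ifs with h1 h2
    · rw [h1]; simp; omega
    · rw [h2]; simp; omega
    · rfl
  · rw [Pi.mul_apply, Pi.mulSingle_eq_of_ne hi, mul_one]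

lemma removeNth_flagTuple_congr {σ : Equiv.Perm (Fin (Q + 1))}
    {τ τ' : Fin n → Equiv.Perm (Fin (Q + 1))} {π π' : Equiv.Perm (Fin (n * Q))}
    (i : Fin (n * Q + 1)) (h : ∀ r : Fin (n * Q + 1), r ≠ i → flagLab τ π r = flagLab τ' π' r) :
    i.removeNth (flagTuple σ τ π) = i.removeNth (flagTuple σ τ' π') := by
  ext1 k
  have := h (i.succAbove k) (Fin.succAbove_ne i k)
  simp only [Fin.removeNth, flagTuple, flagPt, this]

lemma chain_eq_zero_of_eq_neg {X : Type*} {k : ℕ} {u : Chain X k} (h : u = -u) : u = 0 := by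
  ext x
  have := DFunLike.congr_fun h x
  simp only [Finsupp.neg_apply] at this
  simp only [Finsupp.coe_zero, Pi.zero_apply]
  omega

lemma sum_flag_face (i : Fin (n * Q)) :
    ∑ τ : Fin n → Equiv.Perm (Fin (Q + 1)), ∑ π : Equiv.Perm (Fin (n * Q)),
      flagSign τ π • sx (i.succ.removeNth (flagTuple 1 τ π)) = 0 := by
  by_cases hi : (i : ℕ) + 1 < n * Q
  · -- an inner vertex is removed: exchange two consecutive elements of the order `π`
    refine Finset.sum_eq_zero fun τ _ => ?_
    set b : Fin (n * Q) := ⟨i + 1, hi⟩ with hb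
    have hib : i ≠ b := fun e => by have := congrArg Fin.val e; simp [hb] at this
    refine chain_eq_zero_of_eq_neg ?_
    conv_lhs => rw [← Equiv.sum_comp (Equiv.mulRight (Equiv.swap i b))]
    rw [← Finset.sum_neg_distrib]
    refine Finset.sum_congr rfl fun π _ => ?_
    have h1 : flagSign τ (π * Equiv.swap i b) = - flagSign τ π := by
      simp [flagSign, Equiv.Perm.sign_swap hib]
    have h2 : i.succ.removeNth (flagTuple 1 τ (π * Equiv.swap i b)) =
        i.succ.removeNth (flagTuple 1 τ π) := by
      refine removeNth_flagTuple_congr _ fun r hr => flagLab_mul_swap τ π (by simp [hb]) ?_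
      intro e
      exact hr (Fin.ext (by simpa [hb] using e))
    rw [Equiv.coe_mulRight, h1, h2, neg_smul]
  · -- the last vertex is removed: exchange the two functions separated at the last step
    rw [Finset.sum_comm]
    refine Finset.sum_eq_zero fun π _ => ?_
    obtain ⟨⟨i₀, k₀⟩, hik⟩ := finProdFinEquiv.surjective (π i)
    have hne : k₀.castSucc ≠ k₀.succ := (Fin.castSucc_lt_succ (i := k₀)).ne
    refine chain_eq_zero_of_eq_neg ?_
    conv_lhs => rw [← Equiv.sum_comp (Equiv.mulRight
      (Pi.mulSingle i₀ (Equiv.swap k₀.castSucc k₀.succ)))]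
    rw [← Finset.sum_neg_distrib]
    refine Finset.sum_congr rfl fun τ _ => ?_
    have h1 : flagSign (τ * Pi.mulSingle i₀ (Equiv.swap k₀.castSucc k₀.succ)) π =
        - flagSign τ π := by
      have : ∏ j, (Equiv.Perm.sign ((Pi.mulSingle i₀ (Equiv.swap k₀.castSucc k₀.succ) :
          Fin n → Equiv.Perm (Fin (Q + 1))) j) : ℤ) = -1 := by
        rw [Finset.prod_eq_single i₀]
        · simp [Equiv.Perm.sign_swap hne]
        · intro j _ hj
          simp [Pi.mulSingle_eq_of_ne hj]
        · simp
      simp only [flagSign, Pi.mul_apply, Equiv.Perm.sign_mul, Units.val_mul,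
        Finset.prod_mul_distrib, this]
      ring
    have h2 : i.succ.removeNth (flagTuple 1
        (τ * Pi.mulSingle i₀ (Equiv.swap k₀.castSucc k₀.succ)) π) =
        i.succ.removeNth (flagTuple 1 τ π) := by
      refine removeNth_flagTuple_congr _ fun r hr =>
        flagLab_mul_mulSingle τ π hik.symm ?_
      have := r.2
      have h3 : (r : ℕ) ≠ i + 1 := fun e => hr (Fin.ext (by simpa using e))
      omega
    rw [Equiv.coe_mulRight, h1, h2, neg_smul]

lemma bd_flagChain : bd (Config n Q) (n * Q) (flagChain n Q) =
    ∑ τ : Fin n → Equiv.Perm (Fin (Q + 1)), ∑ π : Equiv.Perm (Fin (n * Q)),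
      flagSign τ π • sx (flagFacet 1 τ π) := by
  simp only [flagChain, map_sum, map_smul, bd_sx, Fin.sum_univ_succ, smul_add,
    Finset.sum_add_distrib]
  have h : ∑ τ : Fin n → Equiv.Perm (Fin (Q + 1)), ∑ π : Equiv.Perm (Fin (n * Q)),
      flagSign τ π • ∑ i : Fin (n * Q), (-1 : ℤ) ^ (i.succ : ℕ) •
        sx (i.succ.removeNth (flagTuple 1 τ π)) = 0 := by
    have h' : ∀ i : Fin (n * Q), ∑ τ : Fin n → Equiv.Perm (Fin (Q + 1)),
        ∑ π : Equiv.Perm (Fin (n * Q)), flagSign τ π • ((-1 : ℤ) ^ (i.succ : ℕ) •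
        sx (i.succ.removeNth (flagTuple 1 τ π))) = 0 := by
      intro i
      simp only [smul_comm (flagSign _ _), ← Finset.smul_sum, sum_flag_face, smul_zero]
    simp only [Finset.smul_sum]
    calc _ = ∑ τ : Fin n → Equiv.Perm (Fin (Q + 1)), ∑ i : Fin (n * Q),
        ∑ π : Equiv.Perm (Fin (n * Q)), flagSign τ π • ((-1 : ℤ) ^ (i.succ : ℕ) •
        sx (i.succ.removeNth (flagTuple 1 τ π))) :=
          Finset.sum_congr rfl fun τ _ => Finset.sum_comm
      _ = _ := Finset.sum_comm
      _ = 0 := Finset.sum_eq_zero fun i _ => h' i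
  rw [h, add_zero]
  refine Finset.sum_congr rfl fun τ _ => Finset.sum_congr rfl fun π _ => ?_
  congr 1
  simp only [Fin.val_zero, pow_zero, one_smul]
  rfl

end Cycle

/-! ### Divisibility of equivariant sums over the facets at infinity -/

section Divisibility

/-- A permutation mapping `A` to `R`, increasing on `A` and on its complement. -/
lemma exists_increasing_perm {q : ℕ} {A R : Finset (Fin q)} (h : R.card = A.card) :
    ∃ κ : Equiv.Perm (Fin q), (∀ x, κ x ∈ R ↔ x ∈ A) ∧
      ∀ x y, (x ∈ A ↔ y ∈ A) → (κ x < κ y ↔ x < y) := by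
  have hc : Rᶜ.card = Aᶜ.card := by rw [Finset.card_compl, Finset.card_compl, h]
  let e : A ≃o R := (A.orderIsoOfFin rfl).symm.trans (R.orderIsoOfFin h)
  let f : (Aᶜ : Finset (Fin q)) ≃o (Rᶜ : Finset (Fin q)) :=
    (Aᶜ.orderIsoOfFin rfl).symm.trans (Rᶜ.orderIsoOfFin hc)
  let f' : {x // ¬ x ∈ A} ≃ {x // ¬ x ∈ R} :=
    (Equiv.subtypeEquivRight fun x => Finset.mem_compl.symm).trans
      (f.toEquiv.trans (Equiv.subtypeEquivRight fun x => Finset.mem_compl))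
  let κ : Equiv.Perm (Fin q) := Equiv.subtypeCongr e.toEquiv f'
  have h1 : ∀ x (hx : x ∈ A), κ x = e ⟨x, hx⟩ := fun x hx => by
    simp [κ, Equiv.subtypeCongr, Equiv.sumCompl_symm_apply_of_pos hx]
  have h2 : ∀ x (hx : x ∉ A), κ x = f ⟨x, Finset.mem_compl.2 hx⟩ := fun x hx => by
    simp [κ, Equiv.subtypeCongr, Equiv.sumCompl_symm_apply_of_neg hx, f']
    rfl
  refine ⟨κ, fun x => ?_, fun x y hxy => ?_⟩
  · by_cases hx : x ∈ A
    · simp only [h1 x hx, hx, iff_true]; exact (e ⟨x, hx⟩).2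
    · simp only [h2 x hx, hx, iff_false]
      exact Finset.mem_compl.1 (f ⟨x, Finset.mem_compl.2 hx⟩).2
  · by_cases hx : x ∈ A
    · rw [h1 x hx, h1 y (hxy.1 hx), Subtype.coe_lt_coe, e.lt_iff_lt, Subtype.mk_lt_mk]
    · have hy : y ∉ A := fun hy => hx (hxy.2 hy)
      rw [h2 x hx, h2 y hy, Subtype.coe_lt_coe, f.lt_iff_lt, Subtype.mk_lt_mk]

/-- If `D σ` depends only on the order of the values of `σ` on `A` and on the complement of `A`,
then permuting the values by shuffles shows that the sum of `D` is divisible by the number of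
possible images of `A`. -/
lemma choose_dvd_sum_perm {q : ℕ} (A : Finset (Fin q)) (D : Equiv.Perm (Fin q) → ℤ)
    (hD : ∀ σ σ' : Equiv.Perm (Fin q),
      (∀ j j', (j ∈ A ↔ j' ∈ A) → (σ j < σ j' ↔ σ' j < σ' j')) → D σ = D σ') :
    ((q.choose A.card : ℕ) : ℤ) ∣ ∑ σ, D σ := by
  classical
  have hmem : ∀ σ ∈ (Finset.univ : Finset (Equiv.Perm (Fin q))),
      A.map σ.toEmbedding ∈ Finset.powersetCard A.card Finset.univ := by
    intro σ _
    simp [Finset.mem_powersetCard]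
  rw [← Finset.sum_fiberwise_of_maps_to hmem]
  have hR : ∀ R ∈ Finset.powersetCard A.card (Finset.univ : Finset (Fin q)),
      ∑ σ ∈ Finset.univ.filter (fun σ : Equiv.Perm (Fin q) => A.map σ.toEmbedding = R), D σ =
      ∑ σ ∈ Finset.univ.filter (fun σ : Equiv.Perm (Fin q) => A.map σ.toEmbedding = A), D σ := by
    intro R hR
    obtain ⟨κ, hκ, hκ'⟩ := exists_increasing_perm (Finset.mem_powersetCard.1 hR).2
    have hmap : ∀ (σ : Equiv.Perm (Fin q)) (S : Finset (Fin q)), A.map σ.toEmbedding = S ↔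
        ∀ x, σ x ∈ S ↔ x ∈ A := by
      intro σ S
      rw [Finset.ext_iff, ← σ.forall_congr_right]
      simp only [Finset.mem_map_equiv, Equiv.symm_apply_apply, iff_comm]
    symm
    refine Finset.sum_bij (fun σ _ => κ * σ) ?_ ?_ ?_ ?_
    · intro σ hσ
      simp only [Finset.mem_filter, Finset.mem_univ, true_and, hmap] at hσ ⊢
      intro x
      rw [Equiv.Perm.mul_apply, hκ, hσ]
    · intro a _ b _ hab
      exact mul_left_cancel hab
    · intro σ hσ
      refine ⟨κ⁻¹ * σ, ?_, by simp⟩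
      simp only [Finset.mem_filter, Finset.mem_univ, true_and, hmap] at hσ ⊢
      intro x
      rw [← hκ, Equiv.Perm.mul_apply, perm_apply_inv_self, hσ]
    · intro σ hσ
      simp only [Finset.mem_filter, Finset.mem_univ, true_and, hmap] at hσ
      refine hD _ _ fun j j' hj => ?_
      rw [Equiv.Perm.mul_apply, Equiv.Perm.mul_apply, hκ']
      rw [hσ, hσ, hj]
  rw [Finset.sum_congr rfl hR, Finset.sum_const, Finset.card_powersetCard]
  simp

variable {n Q : ℕ}

lemma permConfig_flagFacet (σ g : Equiv.Perm (Fin (Q + 1))) (τ : Fin n → Equiv.Perm (Fin (Q + 1)))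
    (π : Equiv.Perm (Fin (n * Q))) :
    permConfig n g ∘ flagFacet σ τ π = flagFacet (σ * g⁻¹) (fun i => g * τ i) π :=
  funext fun r => permConfig_flagPt σ g τ π (r + 1)

/-- All vertices of a facet at infinity separate the two groups of functions into which the first
step of the flag divides them. -/
lemma flagLab_separates {τ : Fin n → Equiv.Perm (Fin (Q + 1))} {π : Equiv.Perm (Fin (n * Q))}
    {i : Fin n} {k : Fin Q} (hτ : τ i = 1) {r₀ : Fin (n * Q)} (hr₀ : (r₀ : ℕ) = 0)
    (hπ : π r₀ = finProdFinEquiv (i, k)) (r : ℕ) {j j' : Fin (Q + 1)}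
    (h : flagLab τ π (r + 1) (i, j) = flagLab τ π (r + 1) (i, j')) (hj : (j : ℕ) ≤ k) :
    (j' : ℕ) ≤ k := by
  by_contra hlt
  push Not at hlt
  refine absurd h (ne_of_lt ?_)
  unfold flagLab
  simp only [hτ, inv_one, Equiv.Perm.one_apply]
  have hjj : (j : ℕ) ≤ j' := hj.trans hlt.le
  refine Finset.sum_lt_sum (fun l _ => ?_) ⟨k, Finset.mem_univ _, ?_⟩
  · split_ifs with h1 h2
    · exact le_rfl
    · exact absurd ⟨h1.1, h1.2.trans_le hjj⟩ h2
    · exact zero_le_one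
    · exact le_rfl
  · rw [← hπ, perm_inv_apply_self, if_neg (by omega), if_pos ⟨by omega, hlt⟩]
    exact zero_lt_one

/-- An equivariant function sums to zero modulo `p` over the facets at infinity when the number of
functions is a power of the prime `p`. -/
lemma dvd_sum_flagFacet {p e : ℕ} (hp : p.Prime) (hQ : Q + 1 = p ^ e) (hn : 0 < n * Q)
    (h : (Fin (n * Q) → Config n Q) → ℤ)
    (hh : ∀ (σ : Equiv.Perm (Fin (Q + 1))) (τ : Fin n → Equiv.Perm (Fin (Q + 1)))
      (π : Equiv.Perm (Fin (n * Q))) (g : Equiv.Perm (Fin (Q + 1))),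
      h (permConfig n g ∘ flagFacet σ τ π) = labSign n g * h (flagFacet σ τ π)) :
    (p : ℤ) ∣ ∑ τ : Fin n → Equiv.Perm (Fin (Q + 1)), ∑ π : Equiv.Perm (Fin (n * Q)),
      flagSign τ π * h (flagFacet 1 τ π) := by
  rw [Finset.sum_comm]
  refine Finset.dvd_sum fun π _ => ?_
  set H : Equiv.Perm (Fin (Q + 1)) → (Fin n → Equiv.Perm (Fin (Q + 1))) → ℤ := fun σ τ =>
    (∏ i, (Equiv.Perm.sign (τ i) : ℤ)) * h (flagFacet σ τ π) with hH
  have hHg : ∀ σ τ g, H (σ * g⁻¹) (fun i => g * τ i) = H σ τ := by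
    intro σ τ g
    simp only [hH, ← permConfig_flagFacet, hh, Equiv.Perm.sign_mul, Units.val_mul,
      Finset.prod_mul_distrib, Finset.prod_const, Finset.card_univ, Fintype.card_fin]
    rcases labSign_eq (n := n) g with hs | hs <;> rw [← labSign, hs] <;> ring
  have hsum : ∑ τ, flagSign τ π * h (flagFacet 1 τ π) =
      (Equiv.Perm.sign π : ℤ) * ∑ τ, H 1 τ := by
    rw [Finset.mul_sum]
    exact Finset.sum_congr rfl fun τ _ => by simp only [hH, flagSign]; ring
  rw [hsum]
  refine Dvd.dvd.mul_left ?_ _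
  set r₀ : Fin (n * Q) := ⟨0, hn⟩ with hr₀
  obtain ⟨⟨i, k⟩, hik⟩ := finProdFinEquiv.surjective (π r₀)
  -- use the symmetry to normalise the permutation `τ i`, moving it to the tie-breaking ranking
  let E : (Fin n → Equiv.Perm (Fin (Q + 1))) ≃
      Equiv.Perm (Fin (Q + 1)) × {τ : Fin n → Equiv.Perm (Fin (Q + 1)) // τ i = 1} :=
    { toFun := fun τ => (τ i, ⟨fun j => (τ i)⁻¹ * τ j, by simp⟩)
      invFun := fun x j => x.1 * x.2.1 j
      left_inv := fun τ => by ext1 j; simp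
      right_inv := by
        rintro ⟨θ, τ, hτ⟩
        refine Prod.ext (by simp [hτ]) (Subtype.ext (funext fun j => ?_))
        simp [hτ] }
  have hE : ∑ τ, H 1 τ = ∑ x : Equiv.Perm (Fin (Q + 1)) ×
      {τ : Fin n → Equiv.Perm (Fin (Q + 1)) // τ i = 1}, H x.1 x.2.1 := by
    refine Fintype.sum_equiv E _ _ fun τ => ?_
    have := hHg 1 τ (τ i)⁻¹
    rw [inv_inv, one_mul] at this
    exact this.symm
  rw [hE, Fintype.sum_prod_type_right]
  refine Finset.dvd_sum fun τ _ => ?_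
  set A : Finset (Fin (Q + 1)) := Finset.univ.filter fun j => (j : ℕ) ≤ k with hA
  have hAcard : A.card = k + 1 := by
    have : A = Finset.Iic k.castSucc := by
      ext j; simp [hA, Fin.le_def]
    rw [this, Fin.card_Iic]; simp
  have hdvd : p ∣ (Q + 1).choose A.card := by
    rw [hAcard, hQ]
    refine hp.dvd_choose_pow (Nat.succ_ne_zero _) ?_
    have := k.2
    omega
  refine (Int.natCast_dvd_natCast.2 hdvd).trans (choose_dvd_sum_perm A _ fun σ σ' hσ => ?_)
  have hf : flagFacet σ τ.1 π = flagFacet σ' τ.1 π := by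
    funext r
    refine Prod.ext rfl ?_
    funext j
    simp only [flagFacet, flagPt, tieBreak]
    rw [Nat.cast_inj]
    congr 1
    refine Finset.filter_congr fun j' _ => and_congr_right fun hj => hσ _ _ ?_
    simp only [hA, Finset.mem_filter, Finset.mem_univ, true_and]
    exact ⟨flagLab_separates τ.2 rfl hik.symm r (hj i),
      flagLab_separates τ.2 rfl hik.symm r (hj i).symm⟩
  simp only [hH, hf]

end Divisibility

/-! ### The ray meets exactly one facet at infinity -/

section RayCount

open Filter Topology

variable {n Q : ℕ}

lemma sum_tail_telescope (c : ℕ → ℝ) (t : ℕ) (N : ℕ) (h : t ≤ N) :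
    ∑ s ∈ Finset.range N, (c s - c (s + 1)) * (if t < s + 1 then 1 else 0) = c t - c N := by
  induction N, h using Nat.le_induction with
  | base =>
    rw [sub_self]
    refine Finset.sum_eq_zero fun s hs => ?_
    rw [if_neg (by have := Finset.mem_range.1 hs; omega), mul_zero]
  | succ N hN ih =>
    rw [Finset.sum_range_succ, ih, if_pos (by omega)]
    ring

lemma sum_head_telescope (f : Fin (Q + 1) → ℝ) (m : Fin (Q + 1)) :
    ∑ k : Fin Q, (if (k : ℕ) < m then f k.succ - f k.castSucc else 0) = f m - f 0 := by
  induction m using Fin.induction with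
  | zero => simp
  | succ m ih =>
    have : ∀ k : Fin Q, (if (k : ℕ) < m.succ then f k.succ - f k.castSucc else 0) =
        (if (k : ℕ) < m.castSucc then f k.succ - f k.castSucc else 0) +
          (if k = m then f m.succ - f m.castSucc else 0) := by
      intro k
      by_cases hk : k = m
      · subst hk; simp
      · have hk' : (k : ℕ) ≠ m := fun e => hk (Fin.ext e)
        rw [if_neg hk, add_zero]
        refine if_congr ?_ rfl rfl
        simp only [Fin.val_succ, Fin.val_castSucc]
        omega
    simp only [this, Finset.sum_add_distrib, ih, Finset.sum_ite_eq', Finset.mem_univ, if_true]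
    ring

/-- The increment of the `i`-th row of `a`, sorted by `τ i`, at position `k`, for `x = (i, k)`. -/
noncomputable def rowStep (a : Lab n Q) (τ : Fin n → Equiv.Perm (Fin (Q + 1)))
    (x : Fin (n * Q)) : ℝ :=
  a ((finProdFinEquiv.symm x).1, τ (finProdFinEquiv.symm x).1 (finProdFinEquiv.symm x).2.succ) -
  a ((finProdFinEquiv.symm x).1, τ (finProdFinEquiv.symm x).1 (finProdFinEquiv.symm x).2.castSucc)

/-- The increments of `a` listed in the order `π`, continued by zero. -/
noncomputable def stepSeq (a : Lab n Q) (τ : Fin n → Equiv.Perm (Fin (Q + 1)))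
    (π : Equiv.Perm (Fin (n * Q))) (m : ℕ) : ℝ :=
  if h : m < n * Q then rowStep a τ (π ⟨m, h⟩) else 0

lemma stepSeq_coe (a : Lab n Q) (τ : Fin n → Equiv.Perm (Fin (Q + 1)))
    (π : Equiv.Perm (Fin (n * Q))) (s : Fin (n * Q)) : stepSeq a τ π s = rowStep a τ (π s) := by
  simp [stepSeq]

lemma stepSeq_end (a : Lab n Q) (τ : Fin n → Equiv.Perm (Fin (Q + 1)))
    (π : Equiv.Perm (Fin (n * Q))) {m : ℕ} (h : n * Q ≤ m) : stepSeq a τ π m = 0 :=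
  dif_neg (by omega)

/-- Expansion of a label matrix in the labels of a facet at infinity. -/
lemma flagLab_expansion (a : Lab n Q) (τ : Fin n → Equiv.Perm (Fin (Q + 1)))
    (π : Equiv.Perm (Fin (n * Q))) :
    a - ∑ s : Fin (n * Q), (stepSeq a τ π s - stepSeq a τ π (s + 1)) • flagLab τ π (s + 1) ∈
      constRows n Q := by
  refine ⟨fun i => a (i, τ i 0), ?_⟩
  rintro ⟨i, j⟩
  obtain ⟨m, rfl⟩ := (τ i).surjective j
  have h1 : ∀ k : Fin Q, ∑ s : Fin (n * Q), (stepSeq a τ π s - stepSeq a τ π (s + 1)) *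
      (if (π⁻¹ (finProdFinEquiv (i, k)) : ℕ) < s + 1 then 1 else 0) =
      a (i, τ i k.succ) - a (i, τ i k.castSucc) := by
    intro k
    rw [(Finset.sum_range fun s => (stepSeq a τ π s - stepSeq a τ π (s + 1)) *
      (if (π⁻¹ (finProdFinEquiv (i, k)) : ℕ) < s + 1 then 1 else 0)).symm.trans
      (sum_tail_telescope _ _ _ (π⁻¹ (finProdFinEquiv (i, k))).2.le)]
    rw [stepSeq_end _ _ _ le_rfl, sub_zero, stepSeq_coe, perm_apply_inv_self]
    simp [rowStep]
  have h2 : (∑ s : Fin (n * Q), (stepSeq a τ π s - stepSeq a τ π (s + 1)) • flagLab τ π (s + 1))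
      (i, τ i m) = a (i, τ i m) - a (i, τ i 0) := by
    rw [← sum_head_telescope (fun m => a (i, τ i m)) m]
    simp only [← h1, Finset.sum_apply, Pi.smul_apply, smul_eq_mul, flagLab, perm_inv_apply_self,
      Finset.mul_sum]
    rw [Finset.sum_comm]
    refine Finset.sum_congr rfl fun k _ => ?_
    by_cases hk : (k : ℕ) < m
    · simp only [hk, and_true, if_true]
    · simp only [hk, and_false, if_false, mul_zero, Finset.sum_const_zero]
  rw [Pi.sub_apply, h2]
  ring

lemma omega_flagLab_ne_zero (τ : Fin n → Equiv.Perm (Fin (Q + 1)))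
    (π : Equiv.Perm (Fin (n * Q))) :
    omega n Q (fun s : Fin (n * Q) => flagLab τ π (s + 1)) ≠ 0 :=
  (omega_ne_zero_iff _).2 fun a => ⟨_, flagLab_expansion a τ π⟩

/-- The base point of the ray: its increments are all positive and strictly decrease in the order
of the identity flag. -/
noncomputable def rayPt (n Q : ℕ) : Lab n Q := fun p =>
  ∑ k : Fin Q, if (k : ℕ) < p.2 then ((n * Q : ℕ) : ℝ) - (finProdFinEquiv (p.1, k) : ℕ) else 0

lemma rayPt_step (i : Fin n) (k : Fin Q) : rayPt n Q (i, k.succ) - rayPt n Q (i, k.castSucc) =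
    ((n * Q : ℕ) : ℝ) - (finProdFinEquiv (i, k) : ℕ) := by
  unfold rayPt
  rw [← Finset.sum_sub_distrib, Finset.sum_eq_single k]
  · simp
  · intro l _ hl
    have hl' : (l : ℕ) ≠ k := fun e => hl (Fin.ext e)
    rw [sub_eq_zero]
    refine if_congr ?_ rfl rfl
    simp only [Fin.val_succ, Fin.val_castSucc]
    omega
  · simp

lemma rowStep_rayPt (x : Fin (n * Q)) :
    rowStep (rayPt n Q) 1 x = ((n * Q : ℕ) : ℝ) - (x : ℕ) := by
  rw [rowStep]
  simp only [Pi.one_apply, Equiv.Perm.one_apply]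
  rw [rayPt_step, Prod.mk.eta, Equiv.apply_symm_apply]

lemma rayPt_strictMono (i : Fin n) : StrictMono fun j => rayPt n Q (i, j) := by
  rw [Fin.strictMono_iff_lt_succ]
  intro k
  have h := rayPt_step i k
  have : ((finProdFinEquiv (i, k) : ℕ) : ℝ) < ((n * Q : ℕ) : ℝ) :=
    Nat.cast_lt.2 (finProdFinEquiv (i, k)).2
  linarith

lemma perm_eq_one_of_monotone {m : ℕ} {π : Equiv.Perm (Fin m)} (h : Monotone π) : π = 1 := by
  have := Tuple.unique_monotone (f := (id : Fin m → Fin m)) (σ := π) (τ := 1) h monotone_id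
  ext1 x
  exact congrFun this x

lemma rayPt_pos (s : Fin (n * Q)) :
    stepSeq (rayPt n Q) 1 1 s - stepSeq (rayPt n Q) 1 1 (s + 1) = 1 := by
  rw [stepSeq_coe, Equiv.Perm.one_apply, rowStep_rayPt]
  by_cases h : (s : ℕ) + 1 < n * Q
  · rw [stepSeq, dif_pos h, Equiv.Perm.one_apply, rowStep_rayPt]
    push_cast; ring
  · have h2 := s.2
    rw [stepSeq_end _ _ _ (by omega)]
    have : ((n * Q : ℕ) : ℝ) = ((s + 1 : ℕ) : ℝ) := by congr 1; omega
    rw [this]; push_cast; ring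

/-- The base point of the ray lies in the closed cone of no other facet. -/
lemma eq_one_of_rayPt_nonneg {τ : Fin n → Equiv.Perm (Fin (Q + 1))} {π : Equiv.Perm (Fin (n * Q))}
    (h : ∀ s : Fin (n * Q),
      0 ≤ stepSeq (rayPt n Q) τ π s - stepSeq (rayPt n Q) τ π (s + 1)) : τ = 1 ∧ π = 1 := by
  have hanti : Antitone (stepSeq (rayPt n Q) τ π) := by
    refine antitone_nat_of_succ_le fun m => ?_
    by_cases hm : m < n * Q
    · have := h ⟨m, hm⟩
      simp only at this
      linarith
    · rw [stepSeq_end _ _ _ (by omega), stepSeq_end _ _ _ (by omega)]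
  have hnn : ∀ x, 0 ≤ rowStep (rayPt n Q) τ x := by
    intro x
    obtain ⟨s, rfl⟩ := π.surjective x
    rw [← stepSeq_coe, ← stepSeq_end (rayPt n Q) τ π (le_refl (n * Q))]
    exact hanti s.2.le
  have hτ : τ = 1 := by
    funext i
    refine perm_eq_one_of_monotone ?_
    rw [Fin.monotone_iff_le_succ]
    intro k
    have := hnn (finProdFinEquiv (i, k))
    simp only [rowStep, Equiv.symm_apply_apply, sub_nonneg] at this
    exact (rayPt_strictMono i).le_iff_le.1 this
  refine ⟨hτ, perm_eq_one_of_monotone fun s s' hs => ?_⟩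
  have := hanti (show (s : ℕ) ≤ s' from hs)
  rw [stepSeq_coe, stepSeq_coe, hτ, rowStep_rayPt, rowStep_rayPt] at this
  have h2 : ((π s : ℕ) : ℝ) ≤ (π s' : ℕ) := by linarith
  exact_mod_cast h2

/-- The coefficients of an expansion, given by Cramer's rule, depend continuously on the data. -/
lemma tendsto_cramer {r₀ : Lab n Q} {W : Fin (n * Q) → Lab n Q} (hW : omega n Q W ≠ 0)
    {μ : Fin (n * Q) → ℝ} (hμ : r₀ - ∑ k, μ k • W k ∈ constRows n Q) (k : Fin (n * Q)) :
    Tendsto (fun x : Lab n Q × (Fin (n * Q) → Lab n Q) =>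
      omega n Q (Function.update x.2 k x.1) / omega n Q x.2) (𝓝 (r₀, W)) (𝓝 (μ k)) := by
  have h1 : ContinuousAt (fun x : Lab n Q × (Fin (n * Q) → Lab n Q) =>
      omega n Q (Function.update x.2 k x.1) / omega n Q x.2) (r₀, W) := by
    refine ContinuousAt.div ?_ ?_ hW
    · exact (continuous_omega.comp (continuous_snd.update k continuous_fst)).continuousAt
    · exact (continuous_omega.comp continuous_snd).continuousAt
  have h2 := h1.tendsto
  simp only [cramer omega_constRows hμ k, mul_div_cancel_right₀ _ hW] at h2
  exact h2

lemma rayCochain_eventually_zero {r₀ : Lab n Q} {W : Fin (n * Q) → Lab n Q}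
    (hW : omega n Q W ≠ 0) {μ : Fin (n * Q) → ℝ} (hμ : r₀ - ∑ k, μ k • W k ∈ constRows n Q)
    {k : Fin (n * Q)} (hk : μ k < 0) :
    ∀ᶠ x : Lab n Q × (Fin (n * Q) → Lab n Q) in 𝓝 (r₀, W),
      rayCochain (constRows n Q) (omega n Q) x.1 x.2 = 0 := by
  have h0 : ∀ᶠ x : Lab n Q × (Fin (n * Q) → Lab n Q) in 𝓝 (r₀, W), omega n Q x.2 ≠ 0 :=
    (continuous_omega.comp continuous_snd).continuousAt.eventually_ne hW
  filter_upwards [h0, (tendsto_cramer hW hμ k).eventually_lt_const hk] with x hx hxk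
  obtain ⟨ν, hν⟩ := (omega_ne_zero_iff _).1 hx x.1
  rw [cramer omega_constRows hν k, mul_div_cancel_right₀ _ hx] at hxk
  refine if_neg fun h => ?_
  have := (inCone_iff omega_constRows hx hν).1 h k
  linarith

lemma rayCochain_eventually_sign {r₀ : Lab n Q} {W : Fin (n * Q) → Lab n Q}
    (hW : omega n Q W ≠ 0) {μ : Fin (n * Q) → ℝ} (hμ : r₀ - ∑ k, μ k • W k ∈ constRows n Q)
    (hk : ∀ k, 0 < μ k) :
    ∀ᶠ x : Lab n Q × (Fin (n * Q) → Lab n Q) in 𝓝 (r₀, W),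
      rayCochain (constRows n Q) (omega n Q) x.1 x.2 =
        ((SignType.sign (omega n Q W) : SignType) : ℤ) := by
  have hc : ContinuousAt (fun x : Lab n Q × (Fin (n * Q) → Lab n Q) => omega n Q x.2) (r₀, W) :=
    (continuous_omega.comp continuous_snd).continuousAt
  have hs : ∀ᶠ x : Lab n Q × (Fin (n * Q) → Lab n Q) in 𝓝 (r₀, W),
      SignType.sign (omega n Q x.2) = SignType.sign (omega n Q W) := by
    rcases lt_or_gt_of_ne hW with h | h
    · filter_upwards [hc.eventually_lt_const h] with x hx
      rw [sign_neg h, sign_neg hx]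
    · filter_upwards [hc.eventually_const_lt h] with x hx
      rw [sign_pos h, sign_pos hx]
  filter_upwards [hc.eventually_ne hW, hs,
    eventually_all.2 fun k => (tendsto_cramer hW hμ k).eventually_const_lt (hk k)] with x hx hxs hxk
  obtain ⟨ν, hν⟩ := (omega_ne_zero_iff _).1 hx x.1
  rw [rayCochain, if_pos, hxs]
  refine (inCone_iff omega_constRows hx hν).2 fun k => ?_
  have := hxk k
  rw [cramer omega_constRows hν k, mul_div_cancel_right₀ _ hx] at this
  exact this.le

/-- The ray through a point near `rayPt` meets exactly one facet at infinity, also after a small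
perturbation of the labels. -/
lemma eventually_ray_count :
    ∀ᶠ x : Lab n Q × ((Fin n → Equiv.Perm (Fin (Q + 1))) → Equiv.Perm (Fin (n * Q)) →
        Fin (n * Q) → Lab n Q) in 𝓝 (rayPt n Q, fun τ π s => flagLab τ π (s + 1)),
      (∑ τ, ∑ π, flagSign τ π * rayCochain (constRows n Q) (omega n Q) x.1 (x.2 τ π)) ∈
        ({1, -1} : Set ℤ) := by
  set x₀ : Lab n Q × ((Fin n → Equiv.Perm (Fin (Q + 1))) → Equiv.Perm (Fin (n * Q)) →
        Fin (n * Q) → Lab n Q) := (rayPt n Q, fun τ π s => flagLab τ π (s + 1)) with hx₀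
  have hcont : ∀ τ π, Tendsto (fun x : Lab n Q × ((Fin n → Equiv.Perm (Fin (Q + 1))) →
      Equiv.Perm (Fin (n * Q)) → Fin (n * Q) → Lab n Q) => (x.1, x.2 τ π)) (𝓝 x₀)
      (𝓝 (rayPt n Q, fun s => flagLab τ π (s + 1))) := by
    intro τ π
    have : Continuous (fun x : Lab n Q × ((Fin n → Equiv.Perm (Fin (Q + 1))) →
      Equiv.Perm (Fin (n * Q)) → Fin (n * Q) → Lab n Q) => (x.1, x.2 τ π)) := by fun_prop
    exact this.tendsto x₀
  have h1 : ∀ᶠ x in 𝓝 x₀, ∀ τ π, ¬ (τ = 1 ∧ π = 1) →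
      rayCochain (constRows n Q) (omega n Q) x.1 (x.2 τ π) = 0 := by
    refine eventually_all.2 fun τ => eventually_all.2 fun π => ?_
    by_cases hτπ : τ = 1 ∧ π = 1
    · exact Eventually.of_forall fun x h => absurd hτπ h
    · have : ∃ s : Fin (n * Q),
          stepSeq (rayPt n Q) τ π s - stepSeq (rayPt n Q) τ π (s + 1) < 0 := by
        by_contra! h
        exact hτπ (eq_one_of_rayPt_nonneg h)
      obtain ⟨s, hs⟩ := this
      have := (hcont τ π).eventually (rayCochain_eventually_zero (omega_flagLab_ne_zero τ π)
        (flagLab_expansion (rayPt n Q) τ π) hs)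
      exact this.mono fun x hx _ => hx
  have h2 := (hcont 1 1).eventually (rayCochain_eventually_sign (omega_flagLab_ne_zero 1 1)
    (flagLab_expansion (rayPt n Q) 1 1) fun s => by rw [rayPt_pos]; exact one_pos)
  filter_upwards [h1, h2] with x hx1 hx2
  rw [Finset.sum_eq_single 1, Finset.sum_eq_single 1, hx2]
  · rcases lt_or_gt_of_ne (omega_flagLab_ne_zero (n := n) (Q := Q) 1 1) with h | h
    · rw [sign_neg h]; simp [flagSign]
    · rw [sign_pos h]; simp [flagSign]
  · intro π _ hπ
    rw [hx1 _ _ fun h => hπ h.2, mul_zero]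
  · simp
  · intro τ _ hτ
    refine Finset.sum_eq_zero fun π _ => ?_
    rw [hx1 _ _ fun h => hτ h.1, mul_zero]
  · simp

end RayCount

/-! ### Generic equivariant labellings -/

section Labelling

variable {n Q : ℕ}

/-- The orbits of configurations under permutation of the functions. -/
def orbitSetoid (n Q : ℕ) : Setoid (Config n Q) where
  r x y := ∃ g, permConfig n g x = y
  iseqv :=
    { refl := fun x => ⟨1, permConfig_one x⟩
      symm := by
        rintro x _ ⟨g, rfl⟩
        exact ⟨g⁻¹, by rw [← permConfig_mul, inv_mul_cancel, permConfig_one]⟩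
      trans := by
        rintro x _ _ ⟨g, rfl⟩ ⟨h, rfl⟩
        exact ⟨h * g, permConfig_mul _ _ _⟩ }

/-- A representative of the orbit of `x`. -/
noncomputable def rep (x : Config n Q) : Config n Q := (Quotient.mk (orbitSetoid n Q) x).out

lemma exists_permConfig_rep (x : Config n Q) : ∃ g, permConfig n g (rep x) = x :=
  @Quotient.mk_out _ (orbitSetoid n Q) x

/-- A permutation moving the representative of the orbit of `x` to `x`. -/
noncomputable def orbPerm (x : Config n Q) : Equiv.Perm (Fin (Q + 1)) :=
  (exists_permConfig_rep x).choose

lemma permConfig_orbPerm (x : Config n Q) : permConfig n (orbPerm x) (rep x) = x :=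
  (exists_permConfig_rep x).choose_spec

lemma rep_permConfig (g : Equiv.Perm (Fin (Q + 1))) (x : Config n Q) :
    rep (permConfig n g x) = rep x :=
  congrArg Quotient.out (Quotient.sound (s := orbitSetoid n Q) ⟨g, rfl⟩ :
    Quotient.mk (orbitSetoid n Q) x = Quotient.mk _ (permConfig n g x)).symm

lemma rep_eq (x : Config n Q) : rep x = permConfig n (orbPerm x)⁻¹ x := by
  have h := congrArg (permConfig n (orbPerm x)⁻¹) (permConfig_orbPerm x)
  rwa [← permConfig_mul, inv_mul_cancel, permConfig_one] at h

lemma rep_distinct {x : Config n Q} (hx : Distinct x) : Distinct (rep x) := by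
  rw [rep_eq]; exact permConfig_distinct hx _

lemma orbPerm_permConfig {x : Config n Q} (hx : Distinct x) (g : Equiv.Perm (Fin (Q + 1))) :
    orbPerm (permConfig n g x) = g * orbPerm x := by
  have h : permConfig n ((g * orbPerm x)⁻¹ * orbPerm (permConfig n g x)) (rep x) = rep x := by
    rw [permConfig_mul]
    conv_lhs => rw [← rep_permConfig g x]
    rw [permConfig_orbPerm, ← permConfig_mul, mul_inv_rev, mul_assoc, inv_mul_cancel, mul_one,
      ← rep_eq]
  have := permConfig_free (rep_distinct hx) h
  exact (inv_mul_eq_one.1 this).symm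

variable {X : Set (Config n Q)}

open Classical in
/-- The equivariant labelling with prescribed labels on the representatives belonging to `X`. The
Boolean selects one of two families of labels; the index `none` is reserved for the ray. -/
noncomputable def lbl (y : Option (Bool × X) → Lab n Q) (b : Bool) (x : Config n Q) : Lab n Q :=
  permLab n (orbPerm x) (if h : rep x ∈ X then y (some (b, ⟨rep x, h⟩)) else 0)

open Classical in
lemma lbl_perm (y : Option (Bool × X) → Lab n Q) (b : Bool) {x : Config n Q} (hx : Distinct x)
    (g : Equiv.Perm (Fin (Q + 1))) : lbl y b (permConfig n g x) = permLab n g (lbl y b x) := by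
  rw [lbl, lbl, orbPerm_permConfig hx, permLab_mul]
  have h : ∀ a a' : Config n Q, a = a' →
      (if h : a ∈ X then y (some (b, ⟨a, h⟩)) else 0) =
        if h : a' ∈ X then y (some (b, ⟨a', h⟩)) else 0 := by
    rintro a _ rfl; rfl
  rw [h _ _ (rep_permConfig g x)]

lemma continuous_lbl (b : Bool) (x : Config n Q) :
    Continuous fun y : Option (Bool × X) → Lab n Q => lbl y b x := by
  unfold lbl
  refine (continuous_permLab _).comp ?_
  split_ifs
  · exact continuous_apply _
  · exact continuous_const

lemma rep_mem (hX : ∀ x ∈ X, ∀ g, permConfig n g x ∈ X) {x : Config n Q} (hx : x ∈ X) :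
    rep x ∈ X := by
  rw [rep_eq]; exact hX x hx _

/-- General position of the labels `y`. -/
def Generic (y : Option (Bool × X) → Lab n Q) : Prop :=
  ∀ (j : Fin (n * Q) → Option (Bool × X)) (g : Fin (n * Q) → Equiv.Perm (Fin (Q + 1))),
    Function.Injective j → omega n Q (fun k => permLab n (g k) (y (j k))) ≠ 0

/-- The coboundary of the sign cochain of the ray through `r`. -/
noncomputable def cob (n Q : ℕ) (r : Lab n Q) (w : Fin (n * Q + 1) → Lab n Q) : ℤ :=
  ∑ i : Fin (n * Q + 1), (-1 : ℤ) ^ (i : ℕ) *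
    rayCochain (constRows n Q) (omega n Q) r (i.removeNth w)

/-- The tuple `w` consists of labels of points of `X` in a common cell. -/
def GoodTuple (y : Option (Bool × X) → Lab n Q) (σ : Equiv.Perm (Fin (Q + 1)))
    (τ : Fin n → Equiv.Perm (Fin (Q + 1))) (w : Fin (n * Q + 1) → Lab n Q) : Prop :=
  ∃ (β : Fin (n * Q + 1) → Bool) (x : Fin (n * Q + 1) → Config n Q),
    ∀ k, x k ∈ X ∧ x k ∈ cell σ τ ∧ w k = lbl y (β k) (x k)

/-- On labels of points in a common cell the ray cochain has a coboundary independent of the ray: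
the points of a cell lie in different orbits, so the labels are in general position. -/
lemma cob_eq (hX : ∀ x ∈ X, ∀ g, permConfig n g x ∈ X) {y : Option (Bool × X) → Lab n Q}
    (hy : Generic y) {σ : Equiv.Perm (Fin (Q + 1))} {τ : Fin n → Equiv.Perm (Fin (Q + 1))}
    {w : Fin (n * Q + 1) → Lab n Q} (hw : GoodTuple y σ τ w) :
    cob n Q (y none) w = originDegree (omega n Q) w := by
  by_cases hinj : Function.Injective w
  swap
  · have := coboundary_eq_of_not_injective (Z := constRows n Q) (ω := omega n Q) (r := y none) hinj
    rw [cob, this.1, this.2]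
  obtain ⟨β, x, hx⟩ := hw
  let J : Fin (n * Q + 1) → Option (Bool × X) := fun k =>
    some (β k, ⟨rep (x k), rep_mem hX (hx k).1⟩)
  have hJ : Function.Injective J := by
    intro a b hab
    simp only [J, Option.some.injEq, Prod.mk.injEq, Subtype.mk.injEq] at hab
    obtain ⟨h1, h2⟩ := hab
    have h3 : permConfig n (orbPerm (x b) * (orbPerm (x a))⁻¹) (x a) = x b := by
      rw [permConfig_mul, ← rep_eq, h2, permConfig_orbPerm]
    have h4 := cell_free (hx a).2.1 (h3 ▸ (hx b).2.1)
    rw [h4, permConfig_one] at h3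
    exact hinj (by rw [(hx a).2.2, (hx b).2.2, h1, h3])
  have hwJ : ∀ k, w k = permLab n (orbPerm (x k)) (y (J k)) := by
    intro k
    rw [(hx k).2.2, lbl, dif_pos (rep_mem hX (hx k).1)]
  refine coboundary_eq_of_generic omega_constRows (fun v hv => (omega_ne_zero_iff v).1 hv)
    (fun i => ?_) fun i k => ?_
  · have h := hy (fun k => J (i.succAbove k)) (fun k => orbPerm (x (i.succAbove k)))
      (hJ.comp Fin.succAbove_right_injective)
    simp only [← hwJ] at h
    exact h
  · have h := hy (Function.update (fun l => J (i.succAbove l)) k none)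
      (Function.update (fun l => orbPerm (x (i.succAbove l))) k 1) (by
        intro a b hab
        by_cases ha : a = k <;> by_cases hb : b = k
        · rw [ha, hb]
        · subst ha
          rw [Function.update_self, Function.update_of_ne hb] at hab
          exact absurd hab (Option.some_ne_none _).symm
        · subst hb
          rw [Function.update_self, Function.update_of_ne ha] at hab
          exact absurd hab (Option.some_ne_none _)
        · rw [Function.update_of_ne ha, Function.update_of_ne hb] at hab
          exact Fin.succAbove_right_injective (hJ hab))
    convert h using 2
    funext l
    by_cases hl : l = k
    · subst hl
      simp only [Function.update_self, permLab_one]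
    · simp only [Function.update_of_ne hl, Fin.removeNth, hwJ]

lemma GoodTuple.perm (hX : ∀ x ∈ X, ∀ g, permConfig n g x ∈ X) {y : Option (Bool × X) → Lab n Q}
    {σ : Equiv.Perm (Fin (Q + 1))} {τ : Fin n → Equiv.Perm (Fin (Q + 1))}
    {w : Fin (n * Q + 1) → Lab n Q} (hw : GoodTuple y σ τ w) (g : Equiv.Perm (Fin (Q + 1))) :
    GoodTuple y (σ * g⁻¹) (fun i => g * τ i) (permLab n g ∘ w) := by
  obtain ⟨β, x, hx⟩ := hw
  refine ⟨β, fun k => permConfig n g (x k), fun k =>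
    ⟨hX _ (hx k).1 _, permConfig_mem_cell (hx k).2.1 g, ?_⟩⟩
  rw [lbl_perm _ _ (cell_distinct (hx k).2.1), Function.comp_apply, (hx k).2.2]

lemma cob_perm (hX : ∀ x ∈ X, ∀ g, permConfig n g x ∈ X) {y : Option (Bool × X) → Lab n Q}
    (hy : Generic y) {σ : Equiv.Perm (Fin (Q + 1))} {τ : Fin n → Equiv.Perm (Fin (Q + 1))}
    {w : Fin (n * Q + 1) → Lab n Q} (hw : GoodTuple y σ τ w) (g : Equiv.Perm (Fin (Q + 1))) :
    cob n Q (y none) (permLab n g ∘ w) = labSign n g * cob n Q (y none) w := by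
  rw [cob_eq hX hy hw, cob_eq hX hy (hw.perm hX g),
    originDegree_map (labSign_eq g) (fun w => omega_perm g w)]

end Labelling

/-! ### The homotopy identity -/

section Homotopy

variable {E A : Type*} [NormedAddCommGroup E] [NormedSpace ℝ E]

/-- The evaluation on `u` of the coboundary of `b` along the homotopy from the labelling `f₀` to
the labelling `f₁` of the `m`-fold subdivision. -/
noncomputable def homotopyTerm {M : ℕ} (f₀ f₁ : E → A) (b : Chain A M →ₗ[ℤ] ℤ) (m : ℕ) :
    Chain E M →ₗ[ℤ] ℤ :=
  (b.comp (bd A M)).comp ((prism f₀ f₁ M).comp (subdIter E M m) -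
    (push f₀).comp (subdIterT E M m))

lemma homotopy_identity {M : ℕ} (hM : 0 < M) (f₀ f₁ : E → A) (b : Chain A M →ₗ[ℤ] ℤ) (m : ℕ)
    (z : Chain E (M + 1)) :
    b (bd A M (push f₁ (subdIter E (M + 1) m z))) =
      b (push f₀ (bd E M z)) + homotopyTerm f₀ f₁ b m (bd E M z) := by
  obtain ⟨M, rfl⟩ : ∃ M', M = M' + 1 := ⟨M - 1, by omega⟩
  have h1 := bd_prism f₀ f₁ (subdIter E (M + 1) m (bd E (M + 1) z))
  rw [bd_subdIter, bd_bd, map_zero, map_zero, add_zero] at h1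
  have h2 := bd_subdIterT m (bd E (M + 1) z)
  rw [bd_bd, map_zero, add_zero] at h2
  simp only [homotopyTerm, LinearMap.comp_apply, LinearMap.sub_apply, map_sub]
  rw [h1, bd_push, bd_push, h2, bd_subdIter]
  simp only [map_sub]
  ring

end Homotopy

/-! ### Equivariant maps on distinct configurations have zeros -/

section Zeros

open Filter Topology

variable {n Q : ℕ}

lemma exists_uniform_dot {K : Set (Config n Q)} (hK : IsCompact K) {f : Config n Q → Lab n Q}
    (hf : ContinuousOn f K) (h0 : ∀ x ∈ K, f x ≠ 0) :
    ∃ δ > 0, ∃ ε > 0, ∀ x ∈ K, ∀ x' ∈ K, dist x x' < δ → ∀ L, dist L (f x') < ε →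
      0 < f x ⬝ᵥ L := by
  have hcomp : IsCompact ((fun x => (f x, f x)) '' K) := hK.image_of_continuousOn (hf.prodMk hf)
  have hopen : IsOpen {p : Lab n Q × Lab n Q | 0 < p.1 ⬝ᵥ p.2} :=
    isOpen_lt continuous_const (continuous_fst.dotProduct continuous_snd)
  obtain ⟨ε, hε, hsub⟩ := hcomp.exists_thickening_subset_open hopen (by
    rintro _ ⟨x, hx, rfl⟩
    exact lt_of_le_of_ne (Finset.sum_nonneg fun i _ => mul_self_nonneg _)
      (fun e => h0 x hx (dotProduct_self_eq_zero.1 e.symm)))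
  have hu := Metric.uniformContinuousOn_iff.1 (hK.uniformContinuousOn_of_continuous hf) (ε / 2)
    (half_pos hε)
  obtain ⟨δ, hδ, hu⟩ := hu
  refine ⟨δ, hδ, ε / 2, half_pos hε, fun x hx x' hx' hd L hL => ?_⟩
  refine hsub (a := (f x, L)) (Metric.mem_thickening_iff.2 ⟨(f x, f x), ⟨x, hx, rfl⟩, ?_⟩)
  rw [Prod.dist_eq, max_lt_iff]
  refine ⟨by simpa using hε, ?_⟩
  calc dist L (f x) ≤ dist L (f x') + dist (f x') (f x) := dist_triangle _ _ _
    _ < ε / 2 + ε / 2 := add_lt_add hL (by rw [dist_comm]; exact hu x hx x' hx' hd)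
    _ = ε := add_halves ε

/-- Labels lying in an open half-space whose boundary contains `constRows` have degree zero. -/
lemma originDegree_eq_zero_of_dot {a : Lab n Q} (ha : ∀ i, ∑ j, a (i, j) = 0)
    {w : Fin (n * Q + 1) → Lab n Q} (hw : ∀ k, 0 < a ⬝ᵥ w k) :
    originDegree (omega n Q) w = 0 := by
  let l : Lab n Q →ₗ[ℝ] ℝ :=
    { toFun := fun b => a ⬝ᵥ b
      map_add' := dotProduct_add a
      map_smul' := fun c b => dotProduct_smul c a b }
  refine originDegree_eq_zero (Z := constRows n Q) (l := l) omega_constRows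
    (fun v hv => (omega_ne_zero_iff v).1 hv) ?_ hw
  rintro c ⟨x, hx⟩
  change ∑ p, a p * c p = 0
  simp only [hx, Fintype.sum_prod_type, ← Finset.sum_mul, ha, zero_mul, Finset.sum_const_zero]

/-- The points occurring in a chain. -/
def pts {X : Type*} {k : ℕ} (u : Chain X k) : Set X := ⋃ v ∈ u.support, Set.range v

lemma pts_finite {X : Type*} {k : ℕ} (u : Chain X k) : (pts u).Finite :=
  Set.Finite.biUnion u.support.finite_toSet fun v _ => Set.finite_range v

lemma suppIn_pts {X : Type*} {k : ℕ} (u : Chain X k) : SuppIn (fun v => ∀ i, v i ∈ pts u) u :=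
  fun _ hv i => Set.mem_biUnion hv ⟨i, rfl⟩

lemma pts_subset {X : Type*} {k : ℕ} {u : Chain X k} {S : Set X}
    (h : SuppIn (fun v => ∀ i, v i ∈ S) u) : pts u ⊆ S := by
  intro x hx
  simp only [pts, Set.mem_iUnion] at hx
  obtain ⟨v, hv, i, rfl⟩ := hx
  exact h v hv i

lemma exists_vertexSet (n Q m : ℕ) : ∃ X : Set (Config n Q), X.Finite ∧ (∀ x ∈ X, Distinct x) ∧
    (∀ x ∈ X, ∀ g, permConfig n g x ∈ X) ∧
    ∀ (σ : Equiv.Perm (Fin (Q + 1))) (τ : Fin n → Equiv.Perm (Fin (Q + 1)))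
      (π : Equiv.Perm (Fin (n * Q))),
      SuppIn (fun v => ∀ i, v i ∈ X) (subdIter (Config n Q) _ m (sx (flagTuple σ τ π))) ∧
      SuppIn (fun v => ∀ i, v i ∈ X) (subdIter (Config n Q) _ m (sx (flagFacet σ τ π))) ∧
      SuppIn (fun v => ∀ i, v i ∈ X) (subdIterT (Config n Q) _ m (sx (flagFacet σ τ π))) ∧
      ∀ s, flagFacet σ τ π s ∈ X := by
  let S : Equiv.Perm (Fin (Q + 1)) → (Fin n → Equiv.Perm (Fin (Q + 1))) →
      Equiv.Perm (Fin (n * Q)) → Set (Config n Q) := fun σ τ π =>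
    pts (subdIter (Config n Q) _ m (sx (flagTuple σ τ π))) ∪
    pts (subdIter (Config n Q) _ m (sx (flagFacet σ τ π))) ∪
    pts (subdIterT (Config n Q) _ m (sx (flagFacet σ τ π))) ∪ Set.range (flagFacet σ τ π)
  have hS : ∀ σ τ π, S σ τ π ⊆ cell σ τ := by
    intro σ τ π
    have h1 : SuppIn (fun v => ∀ i, v i ∈ cell σ τ) (sx (flagTuple σ τ π)) :=
      suppIn_sx fun i => flagPt_mem_cell σ τ π _
    have h2 : SuppIn (fun v => ∀ i, v i ∈ cell σ τ) (sx (flagFacet σ τ π)) :=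
      suppIn_sx fun i => flagPt_mem_cell σ τ π _
    refine Set.union_subset (Set.union_subset (Set.union_subset ?_ ?_) ?_) ?_
    · exact pts_subset (subdIter_suppIn (cell_convex σ τ) m h1)
    · exact pts_subset (subdIter_suppIn (cell_convex σ τ) m h2)
    · exact pts_subset (subdIterT_suppIn (cell_convex σ τ) m h2)
    · rintro _ ⟨s, rfl⟩
      exact flagPt_mem_cell σ τ π _
  let X₀ : Set (Config n Q) := ⋃ σ, ⋃ τ, ⋃ π, S σ τ π
  have hX₀ : ∀ σ τ π, S σ τ π ⊆ X₀ := fun σ τ π x hx =>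
    Set.mem_iUnion.2 ⟨σ, Set.mem_iUnion.2 ⟨τ, Set.mem_iUnion.2 ⟨π, hx⟩⟩⟩
  let X : Set (Config n Q) := ⋃ g, permConfig n g '' X₀
  have hXX : X₀ ⊆ X := fun x hx => Set.mem_iUnion.2 ⟨1, x, hx, permConfig_one x⟩
  refine ⟨X, ?_, ?_, ?_, fun σ τ π => ⟨?_, ?_, ?_, ?_⟩⟩
  · refine Set.finite_iUnion fun g => Set.Finite.image _ ?_
    refine Set.finite_iUnion fun σ => Set.finite_iUnion fun τ => Set.finite_iUnion fun π => ?_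
    exact (((pts_finite _).union (pts_finite _)).union (pts_finite _)).union (Set.finite_range _)
  · intro x hx
    obtain ⟨g, y, hy, rfl⟩ := Set.mem_iUnion.1 hx
    simp only [X₀, Set.mem_iUnion] at hy
    obtain ⟨σ, τ, π, hy⟩ := hy
    exact permConfig_distinct (cell_distinct (hS σ τ π hy)) g
  · intro x hx g
    obtain ⟨g', y, hy, rfl⟩ := Set.mem_iUnion.1 hx
    exact Set.mem_iUnion.2 ⟨g * g', y, hy, permConfig_mul _ _ _⟩
  · exact (suppIn_pts _).mono fun v hv i => hXX (hX₀ σ τ π (.inl (.inl (.inl (hv i)))))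
  · exact (suppIn_pts _).mono fun v hv i => hXX (hX₀ σ τ π (.inl (.inl (.inr (hv i)))))
  · exact (suppIn_pts _).mono fun v hv i => hXX (hX₀ σ τ π (.inl (.inr (hv i))))
  · exact fun s => hXX (hX₀ σ τ π (.inr ⟨s, rfl⟩))

variable {X : Set (Config n Q)}

/-- The sign cochain of the ray as a linear functional on chains. -/
noncomputable def rayLin (n Q : ℕ) (r : Lab n Q) : Chain (Lab n Q) (n * Q) →ₗ[ℤ] ℤ :=
  lin (rayCochain (constRows n Q) (omega n Q) r)

lemma rayLin_bd_sx (r : Lab n Q) (w : Fin (n * Q + 1) → Lab n Q) :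
    rayLin n Q r (bd _ _ (sx w)) = cob n Q r w := by
  simp [rayLin, bd_sx, map_sum, cob]

lemma rayLin_bd_perm (hX : ∀ x ∈ X, ∀ g, permConfig n g x ∈ X)
    {y : Option (Bool × X) → Lab n Q} (hy : Generic y) {σ : Equiv.Perm (Fin (Q + 1))}
    {τ : Fin n → Equiv.Perm (Fin (Q + 1))} {u : Chain (Lab n Q) (n * Q + 1)}
    (hu : SuppIn (GoodTuple y σ τ) u) (g : Equiv.Perm (Fin (Q + 1))) :
    rayLin n Q (y none) (bd _ _ (push (permLab n g) u)) =
      labSign n g * rayLin n Q (y none) (bd _ _ u) := by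
  refine hu.congr (F := ((rayLin n Q (y none)).comp (bd _ _)).comp (push (permLab n g)))
    (G := labSign n g • (rayLin n Q (y none)).comp (bd _ _)) fun w hw => ?_
  simp only [LinearMap.comp_apply, LinearMap.smul_apply, push_sx, rayLin_bd_sx, smul_eq_mul]
  exact cob_perm hX hy hw g

lemma homotopyTerm_perm (hX : ∀ x ∈ X, ∀ g, permConfig n g x ∈ X)
    {y : Option (Bool × X) → Lab n Q} (hy : Generic y) {σ : Equiv.Perm (Fin (Q + 1))}
    {τ : Fin n → Equiv.Perm (Fin (Q + 1))} {m : ℕ} {v : Fin (n * Q) → Config n Q}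
    (hv : ∀ i, v i ∈ cell σ τ)
    (hS : SuppIn (fun v => ∀ i, v i ∈ X) (subdIter (Config n Q) _ m (sx v)))
    (hT : SuppIn (fun v => ∀ i, v i ∈ X) (subdIterT (Config n Q) _ m (sx v)))
    (g : Equiv.Perm (Fin (Q + 1))) :
    homotopyTerm (lbl y false) (lbl y true) (rayLin n Q (y none)) m (sx (permConfig n g ∘ v)) =
      labSign n g * homotopyTerm (lbl y false) (lbl y true) (rayLin n Q (y none)) m (sx v) := by
  have hv' : SuppIn (fun v => ∀ i, v i ∈ cell σ τ) (sx v) := suppIn_sx hv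
  have hSc := subdIter_suppIn (cell_convex σ τ) m hv'
  have hTc := subdIterT_suppIn (cell_convex σ τ) m hv'
  have h1 : SuppIn (GoodTuple y σ τ) (prism (lbl y false) (lbl y true) (n * Q)
      (subdIter (Config n Q) _ m (sx v))) := by
    refine SuppIn.map (P := fun v => (∀ i, v i ∈ X) ∧ ∀ i, v i ∈ cell σ τ)
      (fun x hx => ⟨hS x hx, hSc x hx⟩) _ fun x hx => ?_
    refine (prism_supp _ _ x).mono ?_
    rintro w ⟨β, i, hw⟩
    refine ⟨β, fun k => x (i k), fun k => ⟨hx.1 _, hx.2 _, ?_⟩⟩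
    rw [hw]
    cases β k <;> rfl
  have h2 : SuppIn (GoodTuple y σ τ) (push (lbl y false)
      (subdIterT (Config n Q) _ m (sx v))) := by
    refine SuppIn.map (P := fun v => (∀ i, v i ∈ X) ∧ ∀ i, v i ∈ cell σ τ)
      (fun x hx => ⟨hT x hx, hTc x hx⟩) _ fun x hx => ?_
    rw [push_sx]
    exact suppIn_sx ⟨fun _ => false, x, fun k => ⟨hx.1 k, hx.2 k, rfl⟩⟩
  have h3 : prism (lbl y false) (lbl y true) (n * Q)
      (push (permConfig n g) (subdIter (Config n Q) _ m (sx v))) =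
      push (permLab n g) (prism (lbl y false) (lbl y true) (n * Q)
        (subdIter (Config n Q) _ m (sx v))) :=
    prism_push _ _ _ _ _ _ (A := cell σ τ) (fun x hx => lbl_perm y _ (cell_distinct hx) g)
      (fun x hx => lbl_perm y _ (cell_distinct hx) g) hSc
  have h4 : push (lbl y false) (push (permConfig n g) (subdIterT (Config n Q) _ m (sx v))) =
      push (permLab n g) (push (lbl y false) (subdIterT (Config n Q) _ m (sx v))) := by
    rw [push_push, push_push]
    refine hTc.congr fun x hx => ?_
    rw [push_sx, push_sx]
    congr 1
    funext k
    exact lbl_perm y _ (cell_distinct (hx k)) g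
  rw [← push_sx]
  simp only [homotopyTerm, LinearMap.comp_apply, LinearMap.sub_apply, map_sub,
    subdIter_push, subdIterT_push, h3, h4, rayLin_bd_perm hX hy h1, rayLin_bd_perm hX hy h2]
  ring

lemma exists_mesh (n Q : ℕ) {δ : ℝ} (hδ : 0 < δ) :
    ∃ m, ∀ (τ : Fin n → Equiv.Perm (Fin (Q + 1))) (π : Equiv.Perm (Fin (n * Q))),
      SuppIn (fun v => ∀ i j, dist (v i) (v j) < δ)
        (subdIter (Config n Q) _ m (sx (flagTuple 1 τ π))) := by
  obtain ⟨D, hD⟩ := Finite.bddAbove_range fun x : (Fin n → Equiv.Perm (Fin (Q + 1))) ×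
    Equiv.Perm (Fin (n * Q)) × Fin (n * Q + 1) × Fin (n * Q + 1) =>
      dist (flagTuple 1 x.1 x.2.1 x.2.2.1) (flagTuple 1 x.1 x.2.1 x.2.2.2)
  have hlim : Tendsto (fun m => (1 - 1 / ((n * Q + 1 : ℕ) : ℝ)) ^ m * D) atTop (𝓝 0) := by
    have hpos : (0 : ℝ) < ((n * Q + 1 : ℕ) : ℝ) := by positivity
    have h := tendsto_pow_atTop_nhds_zero_of_lt_one
      (r := 1 - 1 / ((n * Q + 1 : ℕ) : ℝ)) (by
        rw [sub_nonneg, div_le_one hpos]; exact_mod_cast Nat.le_add_left 1 _)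
      (by have := one_div_pos.2 hpos; linarith)
    simpa using h.mul_const D
  obtain ⟨m, hm⟩ := (hlim.eventually_lt_const hδ).exists
  refine ⟨m, fun τ π => (subdIter_mesh m (suppIn_sx fun i j => ?_)).mono
    fun v hv i j => (hv i j).trans_lt hm⟩
  exact hD ⟨(τ, π, i, j), rfl⟩

/-- For a prime power `Q + 1`, every continuous equivariant map from the distinct configurations to
the label matrices with vanishing row sums has a zero. -/
theorem exists_zero {p e : ℕ} (hp : p.Prime) (hQ : Q + 1 = p ^ e) (hN : 0 < n * Q)
    (f : Config n Q → Lab n Q) (hcont : ∀ x, Distinct x → ContinuousAt f x)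
    (hequiv : ∀ g x, Distinct x → f (permConfig n g x) = permLab n g (f x))
    (hrow : ∀ x, Distinct x → ∀ i, ∑ j, f x (i, j) = 0) :
    ∃ x, Distinct x ∧ f x = 0 := by
  by_contra! hne
  let K : Set (Config n Q) := ⋃ τ, ⋃ π, convexHull ℝ (Set.range (flagTuple 1 τ π))
  have hKd : ∀ x ∈ K, Distinct x := by
    intro x hx
    simp only [K, Set.mem_iUnion] at hx
    obtain ⟨τ, π, hx⟩ := hx
    refine cell_distinct (convexHull_min ?_ (cell_convex 1 τ) hx)
    rintro _ ⟨i, rfl⟩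
    exact flagPt_mem_cell 1 τ π _
  have hKc : IsCompact K := isCompact_iUnion fun τ => isCompact_iUnion fun π =>
    (Set.finite_range _).isCompact_convexHull (𝕜 := ℝ)
  obtain ⟨δ, hδ, ε, hε, hdot⟩ := exists_uniform_dot hKc
    (fun x hx => (hcont x (hKd x hx)).continuousWithinAt) fun x hx => hne x (hKd x hx)
  obtain ⟨m, hm⟩ := exists_mesh n Q hδ
  obtain ⟨X, hXf, hXd, hX, hXs⟩ := exists_vertexSet n Q m
  have : Finite X := hXf
  have : Fintype (Option (Bool × X)) := Fintype.ofFinite _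
  -- the unperturbed labels
  let y₀ : Option (Bool × X) → Lab n Q := fun o => o.elim (rayPt n Q) fun x =>
    if x.1 then f x.2.1 else x.2.1.1
  have hy₀t : ∀ x ∈ X, lbl y₀ true x = f x := by
    intro x hx
    rw [lbl, dif_pos (rep_mem hX hx)]
    simp only [y₀, Option.elim_some, if_true]
    rw [← hequiv _ _ (rep_distinct (hXd x hx)), permConfig_orbPerm]
  have hy₀f : ∀ x ∈ X, lbl y₀ false x = x.1 := by
    intro x hx
    rw [lbl, dif_pos (rep_mem hX hx)]
    simp only [y₀, Option.elim_some, Bool.false_eq_true, if_false]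
    exact congrArg Prod.fst (permConfig_orbPerm x)
  have hev1 : ∀ᶠ y in 𝓝 y₀, ∀ x ∈ X, dist (lbl y true x) (f x) < ε := by
    rw [eventually_all_finite hXf]
    intro x hx
    have := (continuous_lbl true x).tendsto y₀
    rw [hy₀t x hx] at this
    exact this (Metric.ball_mem_nhds _ hε)
  have hev2 : ∀ᶠ y in 𝓝 y₀, (∑ τ, ∑ π, flagSign τ π * rayCochain (constRows n Q) (omega n Q)
      (y none) (lbl y false ∘ flagFacet 1 τ π)) ∈ ({1, -1} : Set ℤ) := by
    have hc : Continuous fun y : Option (Bool × X) → Lab n Q =>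
        (y none, fun (τ : Fin n → Equiv.Perm (Fin (Q + 1))) (π : Equiv.Perm (Fin (n * Q)))
          (s : Fin (n * Q)) => lbl y false (flagFacet 1 τ π s)) :=
      (continuous_apply none).prodMk (continuous_pi fun τ => continuous_pi fun π =>
        continuous_pi fun s => continuous_lbl false _)
    have h := hc.tendsto y₀
    simp only [hy₀f _ ((hXs 1 _ _).2.2.2 _)] at h
    exact h.eventually eventually_ray_count
  obtain ⟨y, ⟨hy1, hy2⟩, hy⟩ : ∃ y, ((∀ x ∈ X, dist (lbl y true x) (f x) < ε) ∧
      (∑ τ, ∑ π, flagSign τ π * rayCochain (constRows n Q) (omega n Q)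
      (y none) (lbl y false ∘ flagFacet 1 τ π)) ∈ ({1, -1} : Set ℤ)) ∧ Generic y :=
    (dense_generic (Option (Bool × X)) ⟨_, omega_flagLab_ne_zero 1 1⟩).inter_nhds_nonempty
      (hev1.and hev2) |>.imp fun y hy => ⟨hy.2, hy.1⟩
  -- the labels of the small simplices do not surround the origin
  have hzero : rayLin n Q (y none) (bd _ _ (push (lbl y true)
      (subdIter (Config n Q) _ m (flagChain n Q)))) = 0 := by
    simp only [flagChain, map_sum, map_smul]
    refine Finset.sum_eq_zero fun τ _ => Finset.sum_eq_zero fun π _ => ?_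
    have hc : SuppIn (fun v => ∀ i, v i ∈ cell 1 τ)
        (subdIter (Config n Q) _ m (sx (flagTuple 1 τ π))) :=
      subdIter_suppIn (cell_convex 1 τ) m (suppIn_sx fun i => flagPt_mem_cell 1 τ π _)
    have hk : SuppIn (fun v => ∀ i, v i ∈ convexHull ℝ (Set.range (flagTuple 1 τ π)))
        (subdIter (Config n Q) _ m (sx (flagTuple 1 τ π))) :=
      subdIter_suppIn (convex_convexHull ℝ _) m
        (suppIn_sx fun i => subset_convexHull ℝ _ ⟨i, rfl⟩)
    have hP : SuppIn (fun v => (∀ i, v i ∈ cell 1 τ) ∧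
        (∀ i, v i ∈ convexHull ℝ (Set.range (flagTuple 1 τ π))) ∧ (∀ i, v i ∈ X) ∧
        ∀ i j, dist (v i) (v j) < δ) (subdIter (Config n Q) _ m (sx (flagTuple 1 τ π))) :=
      fun v hv => ⟨hc v hv, hk v hv, (hXs 1 τ π).1 v hv, hm τ π v hv⟩
    have h0 := hP.congr (F := ((rayLin n Q (y none)).comp (bd _ _)).comp (push (lbl y true)))
      (G := 0) (by
        rintro v ⟨hv1, hv2, hv3, hv4⟩
        simp only [LinearMap.comp_apply, push_sx, rayLin_bd_sx, LinearMap.zero_apply]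
        have hK : ∀ i, v i ∈ K := fun i => Set.mem_iUnion.2 ⟨τ, Set.mem_iUnion.2 ⟨π, hv2 i⟩⟩
        rw [cob_eq hX hy (σ := 1) (τ := τ) (w := lbl y true ∘ v)
          ⟨fun _ => true, v, fun k => ⟨hv3 k, hv1 k, rfl⟩⟩]
        exact originDegree_eq_zero_of_dot (hrow (v 0) (hKd _ (hK 0))) fun k =>
          hdot _ (hK 0) _ (hK k) (hv4 0 k) _ (hy1 _ (hv3 k)))
    simp only [LinearMap.comp_apply, LinearMap.zero_apply] at h0
    rw [h0, smul_zero]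
  rw [homotopy_identity hN (lbl y false), bd_flagChain] at hzero
  simp only [map_sum, map_smul, push_sx, smul_eq_mul] at hzero
  have hdvd := dvd_sum_flagFacet hp hQ hN
    (fun v => homotopyTerm (lbl y false) (lbl y true) (rayLin n Q (y none)) m (sx v))
    fun σ τ π g => homotopyTerm_perm hX hy (fun i => flagPt_mem_cell σ τ π _)
      (hXs σ τ π).2.1 (hXs σ τ π).2.2.1 g
  simp only [rayLin, lin_sx] at hzero hdvd
  have hpt : (p : ℤ) ∣ ∑ τ, ∑ π, flagSign τ π * rayCochain (constRows n Q) (omega n Q)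
      (y none) (lbl y false ∘ flagFacet 1 τ π) := by
    rw [eq_neg_of_add_eq_zero_left hzero]
    exact hdvd.neg_right
  have hp1 : ¬ (p : ℤ) ∣ 1 := fun h => hp.one_lt.ne' (by
    have := Int.natCast_dvd_natCast.1 (by simpa using h : (p : ℤ) ∣ ((1 : ℕ) : ℤ))
    exact Nat.dvd_one.1 this)
  rcases hy2 with h | h
  · rw [h] at hpt; exact hp1 hpt
  · rw [Set.mem_singleton_iff.1 h] at hpt; exact hp1 (Int.dvd_neg.1 hpt)

end Zeros

/-! ### The partition map of a family of measures -/

section Partition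

open Filter Topology

variable {n Q : ℕ}

/-- The `j`-th affine function of a configuration. -/
noncomputable def affFun (p : Config n Q) (j : Fin (Q + 1)) : EuclideanSpace ℝ (Fin n) →ᵃ[ℝ] ℝ :=
  (∑ i, p.1 (i, j) •
    (EuclideanSpace.proj i : EuclideanSpace ℝ (Fin n) →L[ℝ] ℝ).toLinearMap).toAffineMap
    + AffineMap.const ℝ _ (p.2 j)

lemma affFun_apply (p : Config n Q) (j : Fin (Q + 1)) (x : EuclideanSpace ℝ (Fin n)) :
    affFun p j x = ∑ i, p.1 (i, j) * x i + p.2 j := by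
  simp [affFun]

lemma affFun_injective {p : Config n Q} (hp : Distinct p) : Function.Injective (affFun p) := by
  intro j l h
  have h0 : p.2 j = p.2 l := by
    have := DFunLike.congr_fun h (0 : EuclideanSpace ℝ (Fin n))
    simpa [affFun_apply] using this
  refine hp j l (fun i => ?_) h0
  have := DFunLike.congr_fun h (EuclideanSpace.single i (1 : ℝ))
  simpa [affFun_apply, h0, Pi.single_apply] using this

lemma continuous_affFun (p : Config n Q) (j : Fin (Q + 1)) : Continuous (affFun p j) := by
  simp only [funext (affFun_apply p j)]
  fun_prop

/-- The `j`-th part of the generalized Voronoi partition of a configuration. -/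
def part (p : Config n Q) (j : Fin (Q + 1)) : Set (EuclideanSpace ℝ (Fin n)) :=
  {x | ∀ l, affFun p l x ≤ affFun p j x}

lemma isClosed_argmax {ι : Type*} {u : ι → (EuclideanSpace ℝ (Fin n) →ᵃ[ℝ] ℝ)} (j : ι) :
    IsClosed {x | ∀ l, u l x ≤ u j x} := by
  simp only [Set.ofPred_forall]
  exact isClosed_iInter fun l => isClosed_le (u l).continuous_of_finiteDimensional
    (u j).continuous_of_finiteDimensional

lemma convex_argmax {ι : Type*} {u : ι → (EuclideanSpace ℝ (Fin n) →ᵃ[ℝ] ℝ)} (j : ι) :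
    Convex ℝ {x | ∀ l, u l x ≤ u j x} := by
  intro x hx y hy a b ha hb hab l
  rw [Convex.combo_affine_apply hab, Convex.combo_affine_apply hab]
  exact add_le_add (smul_le_smul_of_nonneg_left (hx l) ha) (smul_le_smul_of_nonneg_left (hy l) hb)

lemma isClosed_part (p : Config n Q) (j : Fin (Q + 1)) : IsClosed (part p j) := isClosed_argmax j

lemma part_perm (g : Equiv.Perm (Fin (Q + 1))) (p : Config n Q) (j : Fin (Q + 1)) :
    part (permConfig n g p) j = part p (g⁻¹ j) := by
  have h : ∀ l x, affFun (permConfig n g p) l x = affFun p (g⁻¹ l) x := fun l x => by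
    simp only [affFun_apply, permConfig_fst, permConfig_snd]
  ext x
  simp only [part, Set.mem_ofPred_eq, h]
  exact ((g⁻¹).surjective.forall (p := fun l => affFun p l x ≤ affFun p (g⁻¹ j) x)).symm

/-- Two of the affine functions of a configuration agree only on a null set. -/
lemma volume_eq_zero {p : Config n Q} (hp : Distinct p) {j l : Fin (Q + 1)} (hjl : j ≠ l) :
    volume {x | affFun p j x = affFun p l x} = 0 := by
  have h := Measure.addHaar_affineSubspace (volume : Measure (EuclideanSpace ℝ (Fin n)))
    ((AffineSubspace.mk' (0 : ℝ) ⊥).comap (affFun p j - affFun p l)) fun htop => hjl <| by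
      refine affFun_injective hp (AffineMap.ext fun x => ?_)
      have hx : x ∈ (AffineSubspace.mk' (0 : ℝ) ⊥).comap (affFun p j - affFun p l) :=
        htop ▸ AffineSubspace.mem_top ℝ _ x
      simpa [AffineSubspace.mem_mk', sub_eq_zero] using hx
  refine measure_mono_null (fun x hx => ?_) h
  simpa [AffineSubspace.mem_mk', sub_eq_zero] using hx

lemma ae_ne {μ : Measure (EuclideanSpace ℝ (Fin n))} (hac : μ ≪ volume) {p : Config n Q}
    (hp : Distinct p) : ∀ᵐ x ∂μ, ∀ j l, j ≠ l → affFun p j x ≠ affFun p l x := by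
  simp only [ae_all_iff]
  exact fun j l hjl => hac.ae_le <| measure_eq_zero_iff_ae_notMem.1 (volume_eq_zero hp hjl)

/-- Away from the null set where two functions agree, membership in a part is locally constant in
the configuration. -/
lemma tendsto_part {μ : Measure (EuclideanSpace ℝ (Fin n))} [IsFiniteMeasure μ] (hac : μ ≪ volume)
    {p : Config n Q} (hp : Distinct p) (j : Fin (Q + 1)) :
    Tendsto (fun p' : Config n Q => μ (part p' j)) (𝓝 p) (𝓝 (μ (part p j))) := by
  refine tendsto_measure_of_ae_tendsto_indicator_of_isFiniteMeasure _
    (isClosed_part p j).measurableSet (fun p' => (isClosed_part p' j).measurableSet) ?_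
  filter_upwards [ae_ne hac hp] with x hx
  have hc : ∀ l, Continuous fun p' : Config n Q => affFun p' l x := fun l => by
    rw [show (fun p' : Config n Q => affFun p' l x) = fun p' => ∑ i, p'.1 (i, l) * x i + p'.2 l
      from funext fun p' => affFun_apply p' l x]
    fun_prop
  have hl : ∀ l, ∀ᶠ p' in 𝓝 p, affFun p' l x ≤ affFun p' j x ↔ affFun p l x ≤ affFun p j x := by
    intro l
    rcases eq_or_ne l j with rfl | hlj
    · simp
    rcases lt_or_gt_of_ne (hx l j hlj) with h | h
    · filter_upwards [(hc l).continuousAt.eventually_lt (hc j).continuousAt h] with p' h'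
      exact iff_of_true h'.le h.le
    · filter_upwards [(hc j).continuousAt.eventually_lt (hc l).continuousAt h] with p' h'
      exact iff_of_false h'.not_ge h.not_ge
  filter_upwards [eventually_all.2 hl] with p' h'
  simp only [part, Set.mem_ofPred_eq, h']

lemma sum_part {μ : Measure (EuclideanSpace ℝ (Fin n))} [IsProbabilityMeasure μ] (hac : μ ≪ volume)
    {p : Config n Q} (hp : Distinct p) : ∑ j, μ.real (part p j) = 1 := by
  have hU : ⋃ j, part p j = Set.univ := by
    refine Set.eq_univ_of_forall fun x => ?_
    obtain ⟨j, hj⟩ := Finite.exists_max fun j => affFun p j x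
    exact Set.mem_iUnion.2 ⟨j, hj⟩
  have hd : Pairwise (Function.onFun (AEDisjoint μ) (part p)) := fun j l hjl =>
    measure_mono_null (fun x hx => le_antisymm (hx.2 j) (hx.1 l)) (hac (volume_eq_zero hp hjl))
  have := measure_iUnion₀ hd fun j => (isClosed_part p j).measurableSet.nullMeasurableSet
  rw [hU, measure_univ, tsum_fintype] at this
  simp only [Measure.real]
  rw [← ENNReal.toReal_sum fun j _ => measure_ne_top _ _, ← this, ENNReal.toReal_one]

/-- The equipartition theorem in positive dimension, for a partition into `Q + 1` parts. -/
lemma exists_equipartition {p e : ℕ} (hp : p.Prime) (hQ : Q + 1 = p ^ e) (hN : 0 < n * Q)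
    (μs : Fin n → Measure (EuclideanSpace ℝ (Fin n))) (hprob : ∀ i, IsProbabilityMeasure (μs i))
    (hac : ∀ i, μs i ≪ volume) :
    ∃ c : Config n Q, Distinct c ∧ ∀ i j, μs i (part c j) = 1 / (Q + 1 : ℕ) := by
  obtain ⟨c, hc, h0⟩ := exists_zero hp hQ hN
    (fun c ij => (μs ij.1).real (part c ij.2) - 1 / (Q + 1 : ℕ))
    (fun c hc => continuousAt_pi.2 fun ij =>
      ((ENNReal.tendsto_toReal (measure_ne_top _ _)).comp
        (tendsto_part (hac ij.1) hc ij.2)).sub_const _)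
    (fun g c _ => funext fun ij => by rw [permLab_apply, part_perm])
    (fun c hc i => by
      rw [Finset.sum_sub_distrib, sum_part (hac i) hc]
      simp only [Finset.sum_const, Finset.card_univ, Fintype.card_fin, nsmul_eq_mul]
      field_simp
      ring)
  refine ⟨c, hc, fun i j => ?_⟩
  have h : (μs i).real (part c j) = 1 / (Q + 1 : ℕ) := sub_eq_zero.1 (congrFun h0 (i, j))
  rw [← ofReal_measureReal, h, ENNReal.ofReal_div_of_pos (by positivity), ENNReal.ofReal_one,
    ENNReal.ofReal_natCast]

end Partition

end Equipart

/-- Any `n` compactly supported absolutely continuous probability measures on `ℝⁿ` can be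
simultaneously partitioned into `q` equal parts by a generalized Voronoi partition given by
`q` pairwise distinct affine functions, for `q` a prime power. -/
theorem stmt_1 (n : ℕ)
    (μs : Fin n → Measure (EuclideanSpace ℝ (Fin n)))
    (hprob : ∀ i, IsProbabilityMeasure (μs i))
    (hcs : ∀ i, ∃ K : Set (EuclideanSpace ℝ (Fin n)), IsCompact K ∧ μs i Kᶜ = 0)
    (hac : ∀ i, μs i ≪ volume)
    (q : ℕ) (hq : IsPrimePow q) :
    ∃ u : Fin q → (EuclideanSpace ℝ (Fin n) →ᵃ[ℝ] ℝ), Function.Injective u ∧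
      ∀ j : Fin q,
        IsClosed {x | ∀ l : Fin q, u l x ≤ u j x} ∧
        Convex ℝ {x | ∀ l : Fin q, u l x ≤ u j x} ∧
        ∀ i : Fin n, μs i {x | ∀ l : Fin q, u l x ≤ u j x} = 1 / q := by
  rcases Nat.eq_zero_or_pos n with rfl | hn
  -- a space of dimension zero carries no measures here, so distinct constants suffice
  · refine ⟨fun j => AffineMap.const ℝ _ (j : ℝ), fun j l h => ?_, fun j =>
      ⟨Equipart.isClosed_argmax j, Equipart.convex_argmax j, fun i => i.elim0⟩⟩
    have := DFunLike.congr_fun h 0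
    exact Fin.ext (by simpa using this)
  · have hq1 := hq.one_lt
    obtain ⟨p, e, hp, -, rfl⟩ := (isPrimePow_nat_iff q).1 hq
    obtain ⟨Q, hQ⟩ : ∃ Q, p ^ e = Q + 1 := ⟨p ^ e - 1, by omega⟩
    rw [hQ] at hq1 ⊢
    obtain ⟨c, hc, h⟩ := Equipart.exists_equipartition hp hQ.symm
      (Nat.mul_pos hn (by omega)) μs hprob hac
    exact ⟨Equipart.affFun c, Equipart.affFun_injective hc, fun j =>
      ⟨Equipart.isClosed_argmax j, Equipart.convex_argmax j, fun i => h i j⟩⟩
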